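/- arXiv:1006.5236 — 2 statements merged into one kernel-verified Lean document; each statement's English description precedes it below -/
import Mathlib

section
/- Let A be a simple artinian ring with involution * that is either infinite or isomorphic to the full matrix ring over F_q with q > 3. Let a, b ∈ A_s be symmetric elements with a, b ∉ A^×. Then there exists u ∈ A^× ∩ A_s such that a + u ∈ A^× and b − u^{-1} ∈ A^×. -/
/-!
Write `A` as `Mₙ(D)` with `D` a division ring having more than three elements. The involution of
`A` is adjoint to an `ε`-hermitian form `h` over `D` for a suitable involution of `D`, and
multiplication by `h` turns the symmetric elements `a`, `b` of `A` into `ε`-hermitian matrices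
`h a`, `b h⁻¹`, so that one looks for an `ε`-hermitian matrix `u`. Here `ε = 1`, or `ε = -1`, the
involution of `D` is trivial, the characteristic is not two and `n` is even.

Taking Schur complements, the problem for a leading block and the problem in the complementary
size solve the problem for the whole matrix. If `D` has more than three symmetric elements, blocks
of size `1` suffice: there is a nonzero symmetric scalar different from `-a₁₁` and `b₁₁⁻¹`. For
`ε = -1` blocks of size `2` are used; their diagonal vanishes, which makes the `2 × 2` problem
explicitly solvable. Finally, if `D` has at most three symmetric elements then `D` is a finite
field with a nontrivial involution. Its norm map is onto, so hermitian forms in two variables are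
isotropic, and after a change of basis `a₁₁ = 0` if `n = 2` and `a₁₁ = b₁₁ = 0` if `n ≥ 3`.
If `n = 1`, the non-units `a` and `b` vanish and `u = 1` works.
-/

open Matrix

/-- An element `x` of a ring with involution is `ε`-hermitian, for a sign `ε`, if `star x = ε x`.
The sign is an element of `ℤˣ` so that hermitian and skew-hermitian elements are treated at once. -/
def IsEpsHermitian {R : Type*} [Ring R] [StarRing R] (ε : ℤˣ) (x : R) : Prop :=
  star x = ε • x

/-- Some `ε`-hermitian unit `u` makes `a + u` and `b - u⁻¹` units. The sign is there because a
symplectic involution on a matrix ring is adjoint to a skew-symmetric form. -/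
def AdmitsUnit {R : Type*} [Ring R] [StarRing R] (ε : ℤˣ) (a b : R) : Prop :=
  ∃ u : Rˣ, IsEpsHermitian ε (u : R) ∧ IsUnit (a + u) ∧ IsUnit (b - (↑u⁻¹ : R))

/-! ### `ε`-hermitian elements -/

section StarRing

variable {R S : Type*} [Ring R] [StarRing R] [Ring S] [StarRing S] {δ ε : ℤˣ} {a b x y : R}

theorem isEpsHermitian_one_iff : IsEpsHermitian 1 x ↔ star x = x := by
  rw [IsEpsHermitian, one_smul]

theorem isEpsHermitian_neg_one_iff : IsEpsHermitian (-1) x ↔ star x = -x := by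
  rw [IsEpsHermitian, Units.neg_smul, one_smul]

theorem star_sign_smul (ε : ℤˣ) (x : R) : star (ε • x) = ε • star x := by
  obtain rfl | rfl := Int.units_eq_one_or ε <;> simp

theorem sign_smul_eq_iff {M : Type*} [AddCommGroup M] {ε : ℤˣ} {x y : M} :
    ε • x = y ↔ x = ε • y := by
  rw [smul_eq_iff_eq_inv_smul, Int.units_inv_eq_self]

namespace IsEpsHermitian

theorem add (hx : IsEpsHermitian ε x) (hy : IsEpsHermitian ε y) : IsEpsHermitian ε (x + y) := by
  rw [IsEpsHermitian, star_add, hx, hy, smul_add]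

theorem sub (hx : IsEpsHermitian ε x) (hy : IsEpsHermitian ε y) : IsEpsHermitian ε (x - y) := by
  rw [IsEpsHermitian, star_sub, hx, hy, smul_sub]

theorem units_inv {u : Rˣ} (hu : IsEpsHermitian ε (u : R)) :
    IsEpsHermitian ε (↑u⁻¹ : R) := by
  obtain rfl | rfl := Int.units_eq_one_or ε
  · rw [isEpsHermitian_one_iff] at hu ⊢
    rw [← Units.coe_star, ← Units.ext_iff] at *
    rw [star_inv, hu]
  · rw [isEpsHermitian_neg_one_iff] at hu ⊢
    rw [← Units.coe_star, ← Units.val_neg, ← Units.ext_iff] at *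
    rw [star_inv, hu, inv_neg]

theorem mul_mul_star (hx : IsEpsHermitian ε x) (p : R) : IsEpsHermitian ε (p * x * star p) := by
  rw [IsEpsHermitian, star_mul, star_mul, star_star, hx, smul_mul_assoc, mul_smul_comm, mul_assoc]

theorem star_mul_mul (hx : IsEpsHermitian ε x) (p : R) : IsEpsHermitian ε (star p * x * p) := by
  simpa only [star_star] using hx.mul_mul_star (star p)

end IsEpsHermitian

namespace AdmitsUnit

theorem of_conj (p : Rˣ) (h : AdmitsUnit ε (star (p : R) * a * p) (↑p⁻¹ * b * star (↑p⁻¹ : R))) :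
    AdmitsUnit ε a b := by
  rw [← Units.coe_star, ← Units.coe_star_inv] at h
  obtain ⟨u, hu, hau, hbu⟩ := h
  refine ⟨(star p)⁻¹ * u * p⁻¹, ?_, ?_, ?_⟩
  · simpa only [Units.val_mul, ← star_inv, Units.coe_star] using hu.star_mul_mul (↑p⁻¹ : R)
  · convert ((star p)⁻¹.isUnit.mul hau).mul p⁻¹.isUnit using 1
    simp [mul_add, add_mul, mul_assoc, -Units.coe_star, -Units.coe_star_inv]
  · convert (p.isUnit.mul hbu).mul (star p).isUnit using 1
    simp [mul_sub, sub_mul, mul_assoc, -Units.coe_star, -Units.coe_star_inv]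

theorem of_twisted_ringEquiv (φ : R ≃+* S) (h : Sˣ)
    (hφ : ∀ x, star (h * φ x) = δ • (h * φ (star x)))
    (hab : AdmitsUnit (δ * ε) (h * φ a) (φ b * ↑h⁻¹)) : AdmitsUnit ε a b := by
  obtain ⟨w, hw, haw, hbw⟩ := hab
  obtain ⟨u, hu⟩ : ∃ u, Units.map (φ : R →* S) u = h⁻¹ * w :=
    (Units.mapEquiv φ.toMulEquiv).surjective _
  have hwu : w = h * Units.map (φ : R →* S) u := by rw [hu, mul_inv_cancel_left]
  have hw' : (w : S) = h * φ u := congrArg Units.val hwu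
  refine ⟨u, φ.injective (h.isUnit.mul_right_injective ?_), ?_, ?_⟩
  · have : δ • ((h : S) * φ (star u)) = δ • ε • ((h : S) * φ u) := by
      rw [← hφ, ← hw', hw, mul_smul]
    simpa only [map_zsmul, Units.smul_def, mul_smul_comm] using (smul_left_cancel δ this)
  · rw [hw', ← mul_add, ← map_add, Units.isUnit_units_mul] at haw
    exact (MulEquiv.isUnit_map φ).mp haw
  · have hinv : (↑w⁻¹ : S) = φ ↑u⁻¹ * ↑h⁻¹ := by rw [hwu, _root_.mul_inv_rev]; rfl
    rw [hinv, ← sub_mul, ← map_sub, Units.isUnit_mul_units] at hbw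
    exact (MulEquiv.isUnit_map φ).mp hbw

theorem of_ringEquiv (φ : R ≃+* S) (hφ : ∀ x, φ (star x) = star (φ x))
    (hab : AdmitsUnit ε (φ a) (φ b)) : AdmitsUnit ε a b :=
  of_twisted_ringEquiv (δ := 1) φ 1 (by simp [hφ]) (by simpa using hab)

theorem zero_zero : AdmitsUnit 1 (0 : R) 0 :=
  ⟨1, isEpsHermitian_one_iff.mpr (by simp), by simp, by simp⟩

theorem of_ne {D : Type*} [DivisionRing D] [StarRing D] {a b p : D} (hp : IsEpsHermitian ε p)
    (hp₀ : p ≠ 0) (hpa : p ≠ -a) (hpb : p ≠ b⁻¹) : AdmitsUnit ε a b := by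
  refine ⟨Units.mk0 p hp₀, hp, IsUnit.mk0 _ fun h => hpa (eq_neg_of_add_eq_zero_right h),
    IsUnit.mk0 _ fun h => hpb ?_⟩
  rw [sub_eq_zero.mp h, Units.val_inv_eq_inv_val, inv_inv, Units.val_mk0]

end AdmitsUnit

end StarRing

/-! ### Block matrices -/

section Blocks

variable {ι κ R : Type*} [Fintype ι] [DecidableEq ι] [Fintype κ] [DecidableEq κ] [Ring R]

theorem isUnit_fromBlocks_of_schur {X : (Matrix ι ι R)ˣ} {Y : Matrix ι κ R} {Z : Matrix κ ι R}
    {T : Matrix κ κ R} (h : IsUnit (T - Z * (↑X⁻¹ : Matrix ι ι R) * Y)) :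
    IsUnit (fromBlocks (X : Matrix ι ι R) Y Z T) := by
  obtain ⟨S, hS⟩ := h
  let L (C : Matrix κ ι R) : (Matrix (ι ⊕ κ) (ι ⊕ κ) R)ˣ :=
    ⟨fromBlocks 1 0 C 1, fromBlocks 1 0 (-C) 1,
      by simp [fromBlocks_multiply], by simp [fromBlocks_multiply]⟩
  let M : (Matrix (ι ⊕ κ) (ι ⊕ κ) R)ˣ :=
    ⟨fromBlocks X 0 0 S, fromBlocks ↑X⁻¹ 0 0 ↑S⁻¹,
      by simp [fromBlocks_multiply], by simp [fromBlocks_multiply]⟩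
  let U (B : Matrix ι κ R) : (Matrix (ι ⊕ κ) (ι ⊕ κ) R)ˣ :=
    ⟨fromBlocks 1 B 0 1, fromBlocks 1 (-B) 0 1,
      by simp [fromBlocks_multiply], by simp [fromBlocks_multiply]⟩
  have hXY : (X : Matrix ι ι R) * ((↑X⁻¹ : Matrix ι ι R) * Y) = Y := by
    rw [← Matrix.mul_assoc, X.mul_inv, Matrix.one_mul]
  have hZX : Z * (↑X⁻¹ : Matrix ι ι R) * (X : Matrix ι ι R) = Z := by
    rw [Matrix.mul_assoc, X.inv_mul, Matrix.mul_one]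
  refine ⟨L (Z * (↑X⁻¹ : Matrix ι ι R)) * M * U ((↑X⁻¹ : Matrix ι ι R) * Y), ?_⟩
  simp only [L, M, U, Units.val_mul, fromBlocks_multiply, hS]
  simp [hXY, hZX, Matrix.mul_assoc Z]

variable [StarRing R] {ε : ℤˣ}

theorem conjTranspose_eq_sign_smul_comm {ι κ : Type*} {Y : Matrix ι κ R} {Z : Matrix κ ι R} :
    Yᴴ = ε • Z ↔ Zᴴ = ε • Y := by
  obtain rfl | rfl := Int.units_eq_one_or ε
  · simp [← conjTranspose_inj (A := Z), eq_comm]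
  · simp [← conjTranspose_inj (A := Zᴴ), eq_neg_iff_add_eq_zero, add_comm]

theorem isEpsHermitian_fromBlocks_iff {X : Matrix ι ι R} {Y : Matrix ι κ R} {Z : Matrix κ ι R}
    {T : Matrix κ κ R} : IsEpsHermitian ε (fromBlocks X Y Z T) ↔
      IsEpsHermitian ε X ∧ Yᴴ = ε • Z ∧ IsEpsHermitian ε T := by
  have hYZ : Zᴴ = ε • Y ↔ Yᴴ = ε • Z := conjTranspose_eq_sign_smul_comm
  simp only [IsEpsHermitian, star_eq_conjTranspose, fromBlocks_conjTranspose, Units.smul_def,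
    fromBlocks_smul, fromBlocks_inj] at hYZ ⊢
  tauto

theorem IsEpsHermitian.schur {X : (Matrix ι ι R)ˣ} {Y : Matrix ι κ R} {Z : Matrix κ ι R}
    {T : Matrix κ κ R} (h : IsEpsHermitian ε (fromBlocks (X : Matrix ι ι R) Y Z T)) :
    IsEpsHermitian ε (T - Z * (↑X⁻¹ : Matrix ι ι R) * Y) := by
  obtain ⟨hX, hY, hT⟩ := isEpsHermitian_fromBlocks_iff.mp h
  have hX' : (↑X⁻¹ : Matrix ι ι R)ᴴ = ε • (↑X⁻¹ : Matrix ι ι R) := hX.units_inv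
  have hZ : Zᴴ = ε • Y := conjTranspose_eq_sign_smul_comm.mp hY
  refine hT.sub ?_
  simp only [IsEpsHermitian, star_eq_conjTranspose, conjTranspose_mul, hX', hY, hZ]
  obtain rfl | rfl := Int.units_eq_one_or ε <;> simp [Matrix.mul_assoc]

/-- Every pair `a, b` of `ε`-hermitian `ι × ι` matrices over `R` satisfies `AdmitsUnit ε a b`. -/
def AdmitsUnits (ι R : Type*) [Fintype ι] [DecidableEq ι] [Ring R] [StarRing R] (ε : ℤˣ) : Prop :=
  ∀ a b : Matrix ι ι R, IsEpsHermitian ε a → IsEpsHermitian ε b → AdmitsUnit ε a b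

namespace AdmitsUnit

theorem of_toBlocks₁₁ {a b : Matrix (ι ⊕ κ) (ι ⊕ κ) R} (ha : IsEpsHermitian ε a)
    (hb : IsEpsHermitian ε b) (h₁ : AdmitsUnit ε a.toBlocks₁₁ b.toBlocks₁₁)
    (h₂ : AdmitsUnits κ R ε) : AdmitsUnit ε a b := by
  obtain ⟨p, hp, ⟨X, hX⟩, ⟨Y, hY⟩⟩ := h₁
  rw [← fromBlocks_toBlocks a] at ha
  rw [← fromBlocks_toBlocks b] at hb
  obtain ⟨ha₁₁, ha₁₂, ha₂₂⟩ := isEpsHermitian_fromBlocks_iff.mp ha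
  obtain ⟨hb₁₁, hb₁₂, hb₂₂⟩ := isEpsHermitian_fromBlocks_iff.mp hb
  have hXh : IsEpsHermitian ε (fromBlocks (X : Matrix ι ι R) a.toBlocks₁₂ a.toBlocks₂₁
      a.toBlocks₂₂) := isEpsHermitian_fromBlocks_iff.mpr ⟨hX ▸ ha₁₁.add hp, ha₁₂, ha₂₂⟩
  have hYh : IsEpsHermitian ε (fromBlocks (Y : Matrix ι ι R) b.toBlocks₁₂ b.toBlocks₂₁
      b.toBlocks₂₂) :=
    isEpsHermitian_fromBlocks_iff.mpr ⟨hY ▸ hb₁₁.sub hp.units_inv, hb₁₂, hb₂₂⟩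
  obtain ⟨u, hu, hau, hbu⟩ := h₂ _ _ hXh.schur hYh.schur
  refine ⟨⟨fromBlocks p 0 0 u, fromBlocks ↑p⁻¹ 0 0 ↑u⁻¹, by simp [fromBlocks_multiply],
      by simp [fromBlocks_multiply]⟩,
    isEpsHermitian_fromBlocks_iff.mpr ⟨hp, by simp, hu⟩, ?_, ?_⟩
  · rw [← fromBlocks_toBlocks a]
    simp only [fromBlocks_add, ← hX, add_zero]
    exact isUnit_fromBlocks_of_schur (by rwa [add_sub_right_comm])
  · rw [← fromBlocks_toBlocks b]
    simp only [Units.inv_mk, sub_eq_add_neg, fromBlocks_neg, fromBlocks_add, neg_zero, add_zero]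
    rw [← sub_eq_add_neg, ← hY]
    exact isUnit_fromBlocks_of_schur (by rwa [← sub_eq_add_neg, sub_right_comm])

theorem of_submatrix {a b : Matrix ι ι R} (e : κ ≃ ι)
    (h : AdmitsUnit ε (a.submatrix e e) (b.submatrix e e)) : AdmitsUnit ε a b :=
  of_ringEquiv (Matrix.reindexRingEquiv R e.symm) (fun _ => rfl) h

end AdmitsUnit

theorem IsEpsHermitian.submatrix {a : Matrix ι ι R} (ha : IsEpsHermitian ε a) (e : κ → ι) :
    IsEpsHermitian ε (a.submatrix e e) :=
  congrArg (fun m : Matrix ι ι R => m.submatrix e e) ha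

theorem IsEpsHermitian.star_apply {a : Matrix ι ι R} (ha : IsEpsHermitian ε a) (i j : ι) :
    star (a i j) = ε • a j i :=
  congrFun₂ ha j i

theorem AdmitsUnit.of_isEmpty [IsEmpty ι] (a b : Matrix ι ι R) : AdmitsUnit ε a b :=
  ⟨1, Subsingleton.elim _ _, isUnit_of_subsingleton _, isUnit_of_subsingleton _⟩

end Blocks

section DiagonalEntry

variable {R : Type*} [Ring R] [StarRing R] {ε : ℤˣ} {n : ℕ}

theorem AdmitsUnit.of_diagonal_entry {a b : Matrix (Fin (n + 1)) (Fin (n + 1)) R}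
    (ha : IsEpsHermitian ε a) (hb : IsEpsHermitian ε b) (i : Fin (n + 1))
    (hi : AdmitsUnit ε (a i i) (b i i)) (hn : AdmitsUnits (Fin n) R ε) : AdmitsUnit ε a b := by
  let e : Unit ⊕ Fin n ≃ Fin (n + 1) := (Equiv.sumComm _ _).trans
    ((Equiv.optionEquivSumPUnit _).symm.trans (finSuccEquiv' i).symm)
  have he : e (Sum.inl ()) = i := finSuccEquiv'_symm_none i
  refine .of_submatrix e (.of_toBlocks₁₁ (ha.submatrix e) (hb.submatrix e) ?_ hn)
  refine .of_ringEquiv (Matrix.uniqueRingEquiv (m := Unit)) (fun _ => rfl) ?_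
  change AdmitsUnit ε (a (e (Sum.inl ())) (e (Sum.inl ()))) (b (e (Sum.inl ())) (e (Sum.inl ())))
  rwa [he]

end DiagonalEntry

theorem exists_mem_ne_of_three_lt_encard {α : Type*} {s : Set α} (hs : 3 < s.encard) (x y z : α) :
    ∃ p ∈ s, p ≠ x ∧ p ≠ y ∧ p ≠ z := by
  by_contra! h
  have hsub : s ⊆ {x, y, z} := fun p hp => by
    have hp' := h p hp
    simp only [Set.mem_insert_iff, Set.mem_singleton_iff]
    tauto
  have hle : s.encard ≤ 3 := by
    calc s.encard ≤ ({x, y, z} : Set α).encard := Set.encard_le_encard hsub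
      _ ≤ ({z} : Set α).encard + 1 + 1 :=
        (Set.encard_insert_le _ _).trans (by gcongr; exact Set.encard_insert_le _ _)
      _ = 3 := by rw [Set.encard_singleton]; norm_num
  exact hs.not_ge hle

/-! ### Matrices over a division ring -/

section DivisionRing

variable {D : Type*} [DivisionRing D]

theorem isUnit_fin_two_of_ne_zero {p q r s : D} (hr : r ≠ 0) (ht : q - p * r⁻¹ * s ≠ 0) :
    IsUnit !![p, q; r, s] := by
  set t := q - p * r⁻¹ * s with ht_def
  have hq : q = t + p * r⁻¹ * s := by rw [ht_def, sub_add_cancel]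
  refine .of_mul_eq_one !![-(r⁻¹ * s * t⁻¹), r⁻¹ + r⁻¹ * s * t⁻¹ * p * r⁻¹;
    t⁻¹, -(t⁻¹ * p * r⁻¹)] ?_
  rw [hq, Matrix.mul_fin_two, Matrix.one_fin_two]
  congr <;> simp [mul_add, add_mul, ← mul_assoc, hr, ht]

variable [StarRing D] {ε : ℤˣ}

theorem admitsUnits_one_of_three_lt_encard (hD : 3 < (selfAdjoint D : Set D).encard) (n : ℕ) :
    AdmitsUnits (Fin n) D 1 := by
  induction n with
  | zero => exact fun a b _ _ => .of_isEmpty a b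
  | succ n ih =>
    intro a b ha hb
    obtain ⟨p, hp, hp₀, hpa, hpb⟩ :=
      exists_mem_ne_of_three_lt_encard hD 0 (-a 0 0) (b 0 0)⁻¹
    exact .of_diagonal_entry ha hb 0 (.of_ne (isEpsHermitian_one_iff.mpr hp) hp₀ hpa hpb) ih

theorem exists_isEpsHermitian_sub_mul_ne_zero {c d l m q r : D} (hd : IsEpsHermitian ε d)
    (hl : l ≠ 0) (hm : m ≠ 0) (hr : r ≠ 0) (hq : q ≠ 0) :
    ∃ z, IsEpsHermitian ε z ∧ q - (c + l * z * m) * r * d ≠ 0 := by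
  by_contra! h
  have h₀ := h 0 (by simp [IsEpsHermitian])
  have hdiff : l * d * m * r * d = 0 :=
    calc l * d * m * r * d
        = q - (c + l * 0 * m) * r * d - (q - (c + l * d * m) * r * d) := by noncomm_ring
      _ = 0 := by rw [h₀, h d hd, sub_zero]
  have hd₀ : d = 0 := by simpa [hl, hm, hr] using hdiff
  exact hq (by simpa [hd₀] using h₀)

theorem AdmitsUnit.of_apply_zero_zero_eq_zero (hD : 3 < ENat.card D)
    {a b : Matrix (Fin 2) (Fin 2) D} (ha : IsEpsHermitian ε a) (hb : IsEpsHermitian ε b)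
    (ha₀ : a 0 0 = 0) : AdmitsUnit ε a b := by
  -- The unit is sought in the form `!![0, y; ε • star y, z]`.
  obtain ⟨y, -, hy, hya, hyb⟩ :=
    exists_mem_ne_of_three_lt_encard (by rwa [Set.encard_univ]) 0 (-a 0 1) (b 1 0)⁻¹
  set w := ε • star y with hw_def
  have hw : w ≠ 0 := by rwa [hw_def, smul_ne_zero_iff_ne, star_ne_zero]
  have ha₁₀ : a 1 0 + w ≠ 0 := by
    rw [sign_smul_eq_iff.mp (ha.star_apply 0 1).symm, ← smul_add, ← star_add, smul_ne_zero_iff_ne,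
      star_ne_zero]
    exact fun h => hya (eq_neg_of_add_eq_zero_right h)
  have hb₁₀ : b 1 0 - y⁻¹ ≠ 0 := fun h => hyb (by rw [sub_eq_zero.mp h, inv_inv])
  have hb₀₁ : b 0 1 - w⁻¹ ≠ 0 := by
    have hwy : w⁻¹ = ε • star y⁻¹ := by
      obtain rfl | rfl := Int.units_eq_one_or ε <;> simp [hw_def, star_inv₀, inv_neg]
    rwa [sign_smul_eq_iff.mp (hb.star_apply 1 0).symm, hwy, ← smul_sub, ← star_sub,
      smul_ne_zero_iff_ne, star_ne_zero]
  obtain ⟨z, hz, hbz⟩ := exists_isEpsHermitian_sub_mul_ne_zero (c := b 0 0) (hb.star_apply 1 1)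
    (inv_ne_zero hw) (inv_ne_zero hy) (inv_ne_zero hb₁₀) hb₀₁
  refine ⟨⟨!![0, y; w, z], !![-(w⁻¹ * z * y⁻¹), w⁻¹; y⁻¹, 0], ?_, ?_⟩, ?_, ?_, ?_⟩
  · simp [hy, hw, mul_assoc, one_fin_two]
  · simp [hy, hw, mul_assoc, one_fin_two]
  · have hz' : star z = ε • z := hz
    ext i j
    fin_cases i <;> fin_cases j <;> simp [hw_def, hz', star_sign_smul, smul_smul, -star_smul]
  · rw [eta_fin_two a, ha₀]
    simpa using isUnit_fin_two_of_ne_zero (p := 0) (s := a 1 1 + z) ha₁₀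
      (by simpa [add_eq_zero_iff_eq_neg'] using hya)
  · rw [eta_fin_two b]
    simpa using isUnit_fin_two_of_ne_zero hb₁₀ hbz

end DivisionRing

section TrivialStar

theorem even_card_of_isUnit_of_transpose_eq_neg {R ι : Type*} [CommRing R] [Fintype ι]
    [DecidableEq ι] (h2 : (2 : R) ≠ 0) {M : Matrix ι ι R} (hM : IsUnit M) (hskew : Mᵀ = -M) :
    Even (Fintype.card ι) := by
  by_contra hodd
  have hdet : M.det = -M.det := by
    conv_lhs => rw [← det_transpose, hskew, det_neg, (Nat.not_even_iff_odd.mp hodd).neg_one_pow]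
    rw [neg_one_mul]
  rw [isUnit_iff_isUnit_det] at hM
  exact h2 (hM.mul_left_eq_zero.mp (by rw [two_mul]; exact eq_neg_iff_add_eq_zero.mp hdet))

variable {D : Type*} [DivisionRing D] [StarRing D] [TrivialStar D]

theorem admitsUnits_neg_one_of_trivialStar (h2 : (2 : D) ≠ 0) (hD : 3 < ENat.card D) (m : ℕ) :
    AdmitsUnits (Fin (2 * m)) D (-1) := by
  induction m with
  | zero => exact fun a b _ _ => have : IsEmpty (Fin (2 * 0)) := Fin.isEmpty; .of_isEmpty a b
  | succ m ih =>
    intro a b ha hb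
    have hdiag (i) : a i i = 0 := by
      have hi : a i i = -a i i := by
        simpa only [star_trivial, Units.neg_smul, one_smul] using ha.star_apply i i
      rw [eq_neg_iff_add_eq_zero, ← two_mul] at hi
      exact (mul_eq_zero.mp hi).resolve_left h2
    let e : Fin 2 ⊕ Fin (2 * m) ≃ Fin (2 * (m + 1)) :=
      finSumFinEquiv.trans (finCongr (by ring))
    exact .of_submatrix e <| .of_toBlocks₁₁ (ha.submatrix e) (hb.submatrix e)
      (.of_apply_zero_zero_eq_zero hD ((ha.submatrix e).submatrix Sum.inl)
        ((hb.submatrix e).submatrix Sum.inl) (hdiag _)) ih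

theorem even_of_isUnit_of_isEpsHermitian_neg_one {n : ℕ} (h2 : (2 : D) ≠ 0)
    {M : Matrix (Fin n) (Fin n) D} (hM : IsUnit M) (hskew : IsEpsHermitian (-1) M) : Even n := by
  let _ : CommRing D :=
    { ‹DivisionRing D› with
      mul_comm := fun c d => by simpa only [star_trivial] using star_mul c d }
  simpa using even_card_of_isUnit_of_transpose_eq_neg h2 hM
    (ext fun i j => by simpa using hskew.star_apply j i)

end TrivialStar

/-! ### Finite fields with a nontrivial involution -/

section Norm

theorem range_eq_ker_of_range_eq_ker {G : Type*} [Group G] [Finite G] {f g : G →* G}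
    (hfg : f.range = g.ker) (hgf : g.range ≤ f.ker) : g.range = f.ker := by
  have hcard : Nat.card f.ker * Nat.card f.range = Nat.card g.range * Nat.card g.ker := by
    rw [← Subgroup.index_ker, ← Subgroup.index_ker, Subgroup.card_mul_index, mul_comm,
      Subgroup.card_mul_index]
  rw [hfg] at hcard
  exact Subgroup.eq_of_le_of_card_ge hgf
    (Nat.eq_of_mul_eq_mul_right Nat.card_pos hcard).le

variable {K : Type*} [Field K] [StarRing K]

theorem exists_mul_star_eq_of_mul_star_eq_one {w x : K} (hw : star w ≠ w) (hx : x * star x = 1) :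
    ∃ y ≠ 0, x * star y = y := by
  by_cases h : x = -1
  · exact ⟨w - star w, sub_ne_zero.mpr hw.symm, by simp [h]⟩
  · exact ⟨1 + x, fun h' => h (eq_neg_of_add_eq_zero_right h'), by simp [mul_add, hx, add_comm]⟩

theorem exists_mul_star_self_eq [Finite K] {w c : K} (hw : star w ≠ w) (hc : star c = c) :
    ∃ t, t * star t = c := by
  obtain rfl | hc₀ := eq_or_ne c 0
  · exact ⟨0, zero_mul _⟩
  let S : Kˣ →* Kˣ := Units.map (starRingEnd K : K →* K)
  let f : Kˣ →* Kˣ := MonoidHom.id Kˣ / S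
  let g : Kˣ →* Kˣ := MonoidHom.id Kˣ * S
  have hSS (x) : S (S x) = x := Units.ext (star_star (x : K))
  have hf (x) : x ∈ f.ker ↔ x = S x := div_eq_one
  have hg (x) : x ∈ g.ker ↔ x * S x = 1 := Iff.rfl
  have hfg : f.range = g.ker := by
    ext x
    rw [hg, MonoidHom.mem_range]
    constructor
    · rintro ⟨y, rfl⟩
      simp [f, hSS]
    · intro hx
      obtain ⟨y, hy, hxy⟩ := exists_mul_star_eq_of_mul_star_eq_one hw (congrArg Units.val hx)
      have hSy : Units.mk0 y hy = S (Units.mk0 y hy) * x :=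
        Units.ext (by simpa [S, mul_comm, starRingEnd_apply] using hxy.symm)
      exact ⟨Units.mk0 y hy, div_eq_of_eq_mul' hSy⟩
  have hgf : g.range ≤ f.ker := by
    rintro _ ⟨x, rfl⟩
    simp [hf, g, hSS, mul_comm]
  have hmem : Units.mk0 c hc₀ ∈ f.ker := (hf _).mpr (Units.ext hc.symm)
  rw [← range_eq_ker_of_range_eq_ker hfg hgf] at hmem
  obtain ⟨t, ht⟩ := hmem
  exact ⟨t, congrArg Units.val ht⟩

end Norm

section Isotropic

variable {ι R : Type*} [Fintype ι] [Ring R] [StarRing R]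

/-- `x` is an isotropic vector of the sesquilinear form with matrix `M`; the zero vector is
allowed. -/
def IsIsotropic (M : Matrix ι ι R) (x : ι → R) : Prop :=
  star x ⬝ᵥ M *ᵥ x = 0

theorem isIsotropic_single {M : Matrix ι ι R} [DecidableEq ι] {j : ι} (h : M j j = 0) :
    IsIsotropic M (Pi.single j 1) := by
  simp [IsIsotropic, h]

end Isotropic

section IsotropicField

variable {ι K : Type*} [Fintype ι] [Field K] [StarRing K]

theorem IsIsotropic.smul {M : Matrix ι ι K} {x : ι → K} (hx : IsIsotropic M x) (c : K) :
    IsIsotropic M (c • x) := by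
  rw [IsIsotropic] at *
  rw [star_smul, mulVec_smul, smul_dotProduct, dotProduct_smul, hx, smul_zero, smul_zero]

variable [DecidableEq ι]

theorem exists_isIsotropic_of_ne [Finite K] {w : K} (hw : star w ≠ w) {M : Matrix ι ι K}
    (hM : IsEpsHermitian 1 M) {i j : ι} (hij : i ≠ j) :
    ∃ x ≠ 0, (∀ k, k ≠ i → k ≠ j → x k = 0) ∧ IsIsotropic M x := by
  have hstar (k l) : star (M k l) = M l k := by simpa using hM.star_apply k l
  obtain hj | hj := eq_or_ne (M j j) 0
  · exact ⟨Pi.single j 1, by simp, fun k _ hk => by simp [hk], isIsotropic_single hj⟩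
  let v (t : K) : ι → K := Pi.single i 1 + Pi.single j t
  have hexpand (t : K) :
      star (v t) ⬝ᵥ M *ᵥ v t = M i i + star t * M j i + (M i j + star t * M j j) * t := by
    rw [star_add, ← Pi.single_star, ← Pi.single_star, star_one]
    simp [v, mulVec_add, add_dotProduct, mul_comm t]
  -- The constant `c` comes from completing the square in `hexpand`.
  obtain ⟨s, hs⟩ := exists_mul_star_self_eq hw
    (c := (M j i * M i j - M i i * M j j) / M j j ^ 2) (by simp [hstar, mul_comm])
  refine ⟨v (s - M j i / M j j), fun h => ?_, fun k hi hj => by simp [v, hi, hj], ?_⟩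
  · simpa [v, hij] using congrFun h i
  · have ht : star (s - M j i / M j j) = star s - M i j / M j j := by simp [hstar]
    rw [IsIsotropic, hexpand, ht]
    field_simp at hs ⊢
    linear_combination hs

theorem exists_isIsotropic_pair [Finite K] {w : K} (hw : star w ≠ w) {a b : Matrix ι ι K}
    (ha : IsEpsHermitian 1 a) (hb : IsEpsHermitian 1 b) (hι : 2 < Fintype.card ι) :
    ∃ x y, IsIsotropic a x ∧ IsIsotropic b y ∧ star y ⬝ᵥ x = 1 := by
  suffices ∃ x y, IsIsotropic a x ∧ IsIsotropic b y ∧ star y ⬝ᵥ x ≠ 0 by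
    obtain ⟨x, y, hx, hy, hxy⟩ := this
    exact ⟨(star y ⬝ᵥ x)⁻¹ • x, y, hx.smul _, hy, by
      rw [dotProduct_smul, smul_eq_mul, inv_mul_cancel₀ hxy]⟩
  obtain ⟨i, j, hij⟩ := Fintype.one_lt_card_iff.mp (one_lt_two.trans hι)
  obtain ⟨x, hx₀, -, hx⟩ := exists_isIsotropic_of_ne hw ha hij
  obtain ⟨p, hxp⟩ := Function.ne_iff.mp hx₀
  obtain ⟨q, hqp, r, hrp, hqr⟩ : ∃ q ≠ p, ∃ r ≠ p, q ≠ r := by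
    have hcard : 1 < (Finset.univ.erase p).card := by
      rw [Finset.card_erase_of_mem (Finset.mem_univ p), Finset.card_univ]
      omega
    simpa using Finset.one_lt_card.mp hcard
  obtain ⟨x', hx'₀, hx'supp, hx'⟩ := exists_isIsotropic_of_ne hw ha hqr
  obtain ⟨k, hx'k⟩ := Function.ne_iff.mp hx'₀
  have hx'p : x' p = 0 := hx'supp p hqp.symm hrp.symm
  have hpk : p ≠ k := by rintro rfl; exact hx'k hx'p
  obtain ⟨y, hy₀, hysupp, hy⟩ := exists_isIsotropic_of_ne hw hb hpk
  have hdot (z : ι → K) : star y ⬝ᵥ z = star (y p) * z p + star (y k) * z k :=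
    Fintype.sum_eq_add p k hpk fun l hl => by simp [hysupp l hl.1 hl.2]
  by_cases hyk : y k = 0
  · have hyp : y p ≠ 0 := fun hyp => hy₀ (funext fun l => by
      by_cases hlp : l = p
      · exact hlp ▸ hyp
      · by_cases hlk : l = k
        · exact hlk ▸ hyk
        · exact hysupp l hlp hlk)
    exact ⟨x, y, hx, hy, by rw [hdot]; simpa [hyk, hyp] using hxp⟩
  · exact ⟨x', y, hx', hy, by rw [hdot]; simpa [hx'p, hyk] using hx'k⟩

end IsotropicField

section Unimodular

variable {ι D : Type*} [Fintype ι] [DecidableEq ι] [DivisionRing D]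

theorem exists_unit_col_eq_row_inv_eq_of_ne_zero {x ξ : ι → D} (h : ξ ⬝ᵥ x = 1) {o : ι}
    (ho : ξ o ≠ 0) :
    ∃ P : (Matrix ι ι D)ˣ, (P : Matrix ι ι D).col o = x ∧ (↑P⁻¹ : Matrix ι ι D).row o = ξ := by
  let P : Matrix ι ι D := 1 - vecMulVec (Pi.single o 1) ((ξ o)⁻¹ • ξ) + vecMulVec x (Pi.single o 1)
  let ρ : ι → D := (1 + x o) • ξ - Pi.single o 1
  let Q : Matrix ι ι D := 1 - vecMulVec x ξ + vecMulVec (Pi.single o 1) ρ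
  have hξP : ξ ᵥ* P = Pi.single o 1 := by
    simp [P, vecMul_add, vecMul_sub, vecMul_vecMulVec, ho, h]
  have hoP : Pi.single o 1 ᵥ* P = Pi.single o 1 - (ξ o)⁻¹ • ξ + x o • Pi.single o 1 := by
    simp [P, vecMul_add, vecMul_sub, vecMul_vecMulVec]
  have hρP : ρ ᵥ* P = (ξ o)⁻¹ • ξ := by
    simp only [ρ, sub_vecMul, add_vecMul, smul_vecMul, hξP, hoP, add_smul, one_smul]
    abel
  have hQP : Q * P = 1 := by
    simp only [Q, add_mul, sub_mul, one_mul, vecMulVec_mul, hξP, hρP]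
    simp only [P]
    abel
  refine ⟨⟨P, Q, mul_eq_one_comm.mp hQP, hQP⟩, ?_, ?_⟩
  · ext i
    simp [P, vecMulVec_apply, one_apply, Pi.single_apply, ho]
  · ext j
    simp [Q, ρ, vecMulVec_apply, one_apply, Pi.single_apply, eq_comm, add_mul]

theorem exists_unit_col_eq_row_inv_eq {x ξ : ι → D} (h : ξ ⬝ᵥ x = 1) (o : ι) :
    ∃ P : (Matrix ι ι D)ˣ, (P : Matrix ι ι D).col o = x ∧ (↑P⁻¹ : Matrix ι ι D).row o = ξ := by
  obtain ⟨k, hk⟩ : ∃ k, ξ k ≠ 0 := by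
    by_contra! hξ
    simp [funext hξ] at h
  obtain ⟨P, hPx, hPξ⟩ := exists_unit_col_eq_row_inv_eq_of_ne_zero h hk
  let σ := Equiv.swap o k
  refine ⟨⟨(P : Matrix ι ι D).submatrix id σ, (↑P⁻¹ : Matrix ι ι D).submatrix σ id,
    by simp, by rw [← submatrix_mul _ _ _ _ _ Function.bijective_id]; simp⟩, ?_, ?_⟩
  · rw [← hPx]
    ext i
    simp [σ]
  · rw [← hPξ]
    ext i
    simp [σ]

end Unimodular

section IsotropicColumn

variable {ι R : Type*} [Fintype ι] [Ring R] [StarRing R] {M P : Matrix ι ι R} {x : ι → R} {o : ι}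

theorem IsIsotropic.star_mul_mul_apply (hx : IsIsotropic M x) (hP : P.col o = x) :
    (star P * M * P) o o = 0 := by
  subst hP
  rw [mul_mul_apply]
  exact hx

theorem IsIsotropic.mul_mul_star_apply (hx : IsIsotropic M x) (hP : P.row o = star x) :
    (P * M * star P) o o = 0 := by
  have hP' : (star P).col o = x := by
    rw [← star_star x, ← hP]
    rfl
  simpa only [star_star] using hx.star_mul_mul_apply hP'

end IsotropicColumn

section FiniteField

variable {K : Type*} [Field K] [StarRing K] [Finite K] {w : K}

theorem admitsUnits_fin_two_of_star_ne (hw : star w ≠ w) (hK : 3 < ENat.card K) :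
    AdmitsUnits (Fin 2) K 1 := by
  intro a b ha hb
  obtain ⟨x, hx₀, -, hx⟩ := exists_isIsotropic_of_ne hw ha zero_ne_one
  obtain ⟨k, hk⟩ := Function.ne_iff.mp hx₀
  obtain ⟨P, hP, -⟩ := exists_unit_col_eq_row_inv_eq (x := x) (ξ := Pi.single k (x k)⁻¹)
    (by rw [single_dotProduct, inv_mul_cancel₀ hk]) 0
  exact .of_conj P (.of_apply_zero_zero_eq_zero hK (ha.star_mul_mul _) (hb.mul_mul_star _)
    (hx.star_mul_mul_apply hP))

theorem admitsUnits_of_star_ne (hw : star w ≠ w) (hK : 3 < ENat.card K) {n : ℕ} (hn : 2 ≤ n) :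
    AdmitsUnits (Fin n) K 1 := by
  induction n, hn using Nat.le_induction with
  | base => exact admitsUnits_fin_two_of_star_ne hw hK
  | succ n hn ih =>
    intro a b ha hb
    obtain ⟨x, y, hx, hy, hyx⟩ := exists_isIsotropic_pair hw ha hb (by simpa using hn)
    obtain ⟨P, hPx, hPy⟩ := exists_unit_col_eq_row_inv_eq hyx 0
    refine .of_conj P (.of_diagonal_entry (ha.star_mul_mul _) (hb.mul_mul_star _) 0 ?_ ih)
    rw [hx.star_mul_mul_apply hPx, hy.mul_mul_star_apply hPy]
    exact .zero_zero

end FiniteField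

/-! ### Finitely many symmetric elements -/

section Finiteness

variable {R : Type*} [Ring R] [StarRing R]

theorem finiteIndex_skewAdjoint (h : (selfAdjoint R : Set R).Finite) :
    (skewAdjoint R).FiniteIndex := by
  let trace : R →+ R := AddMonoidHom.id R + (starAddEquiv : R ≃+ R)
  have hker : trace.ker = skewAdjoint R := by
    ext x
    exact add_eq_zero_iff_neg_eq.trans eq_comm
  have hrange : (trace.range : Set R) ⊆ selfAdjoint R := by
    rintro _ ⟨x, rfl⟩
    exact IsSelfAdjoint.add_star_self x
  have : Finite trace.range := (h.subset hrange).to_subtype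
  exact hker ▸ inferInstance

theorem exists_ne_zero_forall_mul_mem_skewAdjoint [Infinite R]
    (h : (selfAdjoint R : Set R).Finite) (s : Finset R) :
    ∃ x ≠ 0, ∀ d ∈ s, d * x ∈ skewAdjoint R := by
  have := finiteIndex_skewAdjoint h
  let V : AddSubgroup R := ⨅ d ∈ s, (skewAdjoint R).comap (AddMonoidHom.mulLeft d)
  have hV : V.FiniteIndex := AddSubgroup.finiteIndex_iInf' _ fun d _ =>
    ⟨by
      have := AddSubgroup.isFiniteRelIndex_of_finiteIndex (H := skewAdjoint R)
        (K := (AddMonoidHom.mulLeft d).range)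
      rw [AddSubgroup.index_comap]
      exact AddSubgroup.relIndex_ne_zero⟩
  obtain hbot | ⟨x, hxV, hx⟩ := V.bot_or_exists_ne_zero
  · have : Finite R := (AddSubgroup.finite_iff_finite_and_finiteIndex V).mpr
      ⟨hbot ▸ (inferInstance : Finite (⊥ : AddSubgroup R)), hV⟩
    exact (not_finite R).elim
  · exact ⟨x, hx, by simpa [V, AddSubgroup.mem_iInf] using hxV⟩

theorem finite_of_finite_selfAdjoint [NoZeroDivisors R] (h : (selfAdjoint R : Set R).Finite) :
    Finite R := by
  classical
  by_contra hfin
  have : Infinite R := not_finite_iff_infinite.mp hfin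
  obtain ⟨x, hx₀, hx⟩ := exists_ne_zero_forall_mul_mem_skewAdjoint h {1}
  obtain ⟨y, hy₀, hy⟩ := exists_ne_zero_forall_mul_mem_skewAdjoint h {1, x}
  obtain ⟨z, hz₀, hz⟩ := exists_ne_zero_forall_mul_mem_skewAdjoint h {1, x, y, x * y}
  simp only [Finset.mem_insert, Finset.mem_singleton, forall_eq_or_imp, forall_eq, one_mul,
    skewAdjoint.mem_iff] at hx hy hz
  obtain ⟨hy, hxy⟩ := hy
  obtain ⟨hz, hxz, hyz, hxyz⟩ := hz
  -- `z` anticommutes with `x` and `y`, so `x * y * z` is both symmetric and skew.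
  have hzx : z * x = -(x * z) := by rw [← hxz, star_mul, hx, hz, neg_mul_neg]
  have hzy : z * y = -(y * z) := by rw [← hyz, star_mul, hy, hz, neg_mul_neg]
  have hneg : x * y * z = -(x * y * z) :=
    calc x * y * z = z * (x * y) := by
          rw [← mul_assoc, hzx, neg_mul, mul_assoc x z, hzy, mul_neg, neg_neg, mul_assoc]
      _ = star (x * y * z) := by rw [star_mul, hz, hxy, neg_mul_neg]
      _ = -(x * y * z) := hxyz
  have h2 : (2 : R) = 0 := by
    rw [eq_neg_iff_add_eq_zero, ← two_mul] at hneg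
    simpa [hx₀, hy₀, hz₀] using hneg
  have hskew : skewAdjoint R ≤ selfAdjoint R := fun d hd => by
    have hd : star d = -d := hd
    rw [selfAdjoint.mem_iff, hd, neg_eq_iff_add_eq_zero, ← two_mul, h2, zero_mul]
  exact hfin ((AddSubgroup.finite_iff_finite_and_finiteIndex (skewAdjoint R)).mpr
    ⟨(h.subset hskew).to_subtype, finiteIndex_skewAdjoint h⟩)

end Finiteness

/-! ### The form defining an involution of a matrix ring -/

/-- An `ε`-symmetric generator `m` of the corner `(star e) A e`, with inverse `m'` in
`e A (star e)`. It encodes the `ε`-hermitian form `(x, y) ↦ m' * star x * y` on `A e`, which has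
values in `e A e` and is hermitian for the involution `x ↦ m' * star x * m` of `e A e`. -/
structure IsCornerForm {A : Type*} [Ring A] [StarRing A] (ε : ℤˣ) (e m m' : A) : Prop where
  isEpsHermitian : IsEpsHermitian ε m
  isEpsHermitian_inv : IsEpsHermitian ε m'
  inv_mul : m' * m = e
  mul_inv : m * m' = star e
  mul_idempotent : m * e = m
  idempotent_mul_inv : e * m' = m'

namespace IsCornerForm

variable {A : Type*} [Ring A] [StarRing A] {ε : ℤˣ} {e m m' : A}

theorem of_leftInverse {g : A} (hm : IsEpsHermitian ε m) (he : e * e = e) (hme : m * e = m)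
    (hgm : g * m = e) (heg : e * g = g) : IsCornerForm ε e m (g * star e) := by
  have hem : star e * m = m := by
    have h := congrArg star hme
    rw [star_mul, hm, mul_smul_comm] at h
    exact smul_left_cancel ε h
  have hinv_mul : g * star e * m = e := by rw [mul_assoc, hem, hgm]
  have hm_star : m * star (g * star e) = ε • star e := by
    rw [← sign_smul_eq_iff, ← smul_mul_assoc, ← hm, ← star_mul, hinv_mul]
  have hinv : star (g * star e) = ε • (g * star e) :=
    calc star (g * star e) = e * star (g * star e) := by
          rw [star_mul, star_star, ← mul_assoc, he]
      _ = g * star e * (m * star (g * star e)) := by rw [← mul_assoc, hinv_mul]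
      _ = ε • (g * star e) := by rw [hm_star, mul_smul_comm, mul_assoc, ← star_mul, he]
  refine ⟨hm, hinv, hinv_mul, ?_, hme, by rw [← mul_assoc, heg]⟩
  rw [hinv, mul_smul_comm] at hm_star
  exact smul_left_cancel ε hm_star

theorem star_idempotent_mul (h : IsCornerForm ε e m m') : star e * m = m := by
  rw [← h.mul_inv, mul_assoc, h.inv_mul, h.mul_idempotent]

theorem inv_mul_star_mul_mul (h : IsCornerForm ε e m m') {x : A} (y : A) (hx : x * e = x) :
    m' * star (x * y) * m = m' * star y * m * (m' * star x * m) := by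
  have hx' : m * m' * star x = star x := by rw [h.mul_inv, ← star_mul, hx]
  calc m' * star (x * y) * m = m' * (star y * (m * m' * star x)) * m := by rw [star_mul, hx']
    _ = m' * star y * m * (m' * star x * m) := by simp only [mul_assoc]

theorem inv_mul_star_mul_involutive (h : IsCornerForm ε e m m') (x : A) :
    m' * star (m' * star x * m) * m = e * x * e := by
  have hm : star m = ε • m := h.isEpsHermitian
  have hm' : star m' = ε • m' := h.isEpsHermitian_inv
  simp only [star_mul, star_star, hm, hm', smul_mul_assoc, mul_smul_comm, smul_smul,
    Int.units_mul_self, one_smul]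
  rw [← mul_assoc, ← mul_assoc, h.inv_mul, mul_assoc, h.inv_mul]

end IsCornerForm

section MatrixUnits

variable {A D n : Type*} [Ring A] [Fintype n] [DecidableEq n]

/-- The element of `A` corresponding to `d` times the `(i, j)`-th matrix unit. -/
def matrixUnit [Ring D] (φ : A ≃+* Matrix n n D) (i j : n) (d : D) : A :=
  φ.symm (single i j d)

section Ring

variable [Ring D] (φ : A ≃+* Matrix n n D)

@[simp]
theorem map_matrixUnit (i j : n) (d : D) : φ (matrixUnit φ i j d) = single i j d :=
  φ.apply_symm_apply _

theorem matrixUnit_mul_matrixUnit (i j k : n) (c d : D) :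
    matrixUnit φ i j c * matrixUnit φ j k d = matrixUnit φ i k (c * d) :=
  φ.injective (by simp)

theorem matrixUnit_mul_mul_matrixUnit (i j k l : n) (c d : D) (x : A) :
    matrixUnit φ i j c * x * matrixUnit φ k l d = matrixUnit φ i l (c * φ x j k * d) :=
  φ.injective (by simp)

theorem matrixUnit_zero (i j : n) : matrixUnit φ i j 0 = 0 :=
  φ.injective (by simp)

theorem matrixUnit_add (i j : n) (c d : D) :
    matrixUnit φ i j (c + d) = matrixUnit φ i j c + matrixUnit φ i j d :=
  φ.injective (by simp [single_add])

theorem matrixUnit_injective (i j : n) : Function.Injective (matrixUnit φ i j) := fun c d h => by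
  simpa using congrFun₂ (congrArg φ h) i j

end Ring

variable [DivisionRing D] (φ : A ≃+* Matrix n n D) (o : n)

theorem exists_mul_mul_matrixUnit_ne_zero {f : A} (hf : f ≠ 0) :
    ∃ x, f * x * matrixUnit φ o o 1 ≠ 0 := by
  obtain ⟨i, j, hij⟩ : ∃ i j, φ f i j ≠ 0 := by
    by_contra! hzero
    exact hf (φ.injective (by ext i j; simp [hzero]))
  refine ⟨matrixUnit φ j o 1, fun h => hij ?_⟩
  rw [mul_assoc, matrixUnit_mul_matrixUnit] at h
  simpa using congrFun₂ (congrArg φ h) i o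

theorem exists_leftInverse_of_mul_matrixUnit_eq {m : A} (hm₀ : m ≠ 0)
    (hm : m * matrixUnit φ o o 1 = m) :
    ∃ g, g * m = matrixUnit φ o o 1 ∧ matrixUnit φ o o 1 * g = g := by
  obtain ⟨k, hk⟩ : ∃ k, φ m k o ≠ 0 := by
    by_contra! hzero
    refine hm₀ (hm ▸ φ.injective ?_)
    ext i j
    by_cases hj : j = o <;> simp [single_apply, Matrix.mul_apply, hzero, Ne.symm, hj]
  refine ⟨matrixUnit φ o k (φ m k o)⁻¹, ?_, by rw [matrixUnit_mul_matrixUnit, one_mul]⟩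
  calc matrixUnit φ o k (φ m k o)⁻¹ * m
      = matrixUnit φ o k (φ m k o)⁻¹ * m * matrixUnit φ o o 1 := by rw [mul_assoc, hm]
    _ = matrixUnit φ o o 1 := by
      rw [matrixUnit_mul_mul_matrixUnit, inv_mul_cancel₀ hk, one_mul]

variable [StarRing A]

theorem exists_isCornerForm_of_isEpsHermitian {ε : ℤˣ} {m : A} (hm₀ : m ≠ 0)
    (hme : m * matrixUnit φ o o 1 = m) (hm : IsEpsHermitian ε m) :
    ∃ m', IsCornerForm ε (matrixUnit φ o o 1) m m' := by
  obtain ⟨g, hgm, hg⟩ := exists_leftInverse_of_mul_matrixUnit_eq φ o hm₀ hme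
  exact ⟨_, .of_leftInverse hm (by rw [matrixUnit_mul_matrixUnit, one_mul]) hme hgm hg⟩

theorem exists_isCornerForm : ∃ (ε : ℤˣ) (m m' : A), IsCornerForm ε (matrixUnit φ o o 1) m m' ∧
    (ε = 1 ∨ ε = -1 ∧ (2 : D) ≠ 0 ∧
      ∀ x, IsEpsHermitian (-1) (star (matrixUnit φ o o 1) * x * matrixUnit φ o o 1)) := by
  set e := matrixUnit φ o o (1 : D) with he_def
  have he : e * e = e := by rw [he_def, matrixUnit_mul_matrixUnit, one_mul]
  have he₀ : star e ≠ 0 := by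
    rw [Ne, star_eq_zero, he_def, ← matrixUnit_zero φ o o]
    exact (matrixUnit_injective φ o o).ne one_ne_zero
  have hmul_e (x : A) : star e * x * e * e = star e * x * e := by rw [mul_assoc, he]
  by_cases hskew : ∀ x, IsEpsHermitian (-1) (star e * x * e)
  · obtain ⟨x, hx⟩ := exists_mul_mul_matrixUnit_ne_zero φ o he₀
    by_cases h2 : (2 : D) = 0
    · have hneg : -(star e * x * e) = star e * x * e := φ.injective <| by
        rw [map_neg]
        ext i j
        rw [neg_apply, neg_eq_iff_add_eq_zero, ← two_mul, h2, zero_mul]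
      have hsymm : IsEpsHermitian 1 (star e * x * e) := by
        rw [isEpsHermitian_one_iff, isEpsHermitian_neg_one_iff.mp (hskew x), hneg]
      obtain ⟨m', hm'⟩ := exists_isCornerForm_of_isEpsHermitian φ o hx (hmul_e x) hsymm
      exact ⟨1, _, m', hm', .inl rfl⟩
    · obtain ⟨m', hm'⟩ := exists_isCornerForm_of_isEpsHermitian φ o hx (hmul_e x) (hskew x)
      exact ⟨-1, _, m', hm', .inr ⟨rfl, h2, hskew⟩⟩
  · push Not at hskew
    obtain ⟨x, hx⟩ := hskew
    rw [isEpsHermitian_neg_one_iff, ← add_eq_zero_iff_eq_neg, add_comm] at hx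
    have hsum : star e * x * e + star (star e * x * e) = star e * (x + star x) * e := by
      simp only [star_mul, star_star, mul_add, add_mul, mul_assoc]
    obtain ⟨m', hm'⟩ := exists_isCornerForm_of_isEpsHermitian φ o hx (by rw [hsum, hmul_e])
      (isEpsHermitian_one_iff.mpr (IsSelfAdjoint.add_star_self _))
    exact ⟨1, _, m', hm', .inl rfl⟩

variable {φ o} {ε : ℤˣ} {m m' : A}

namespace IsCornerForm

theorem matrixUnit_apply_inv_mul_mul (h : IsCornerForm ε (matrixUnit φ o o 1) m m') (x : A) :
    matrixUnit φ o o (φ (m' * x * m) o o) = m' * x * m := by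
  have key := matrixUnit_mul_mul_matrixUnit φ o o o o 1 1 (m' * x * m)
  rw [one_mul, mul_one] at key
  rw [← key, ← mul_assoc, ← mul_assoc, h.idempotent_mul_inv, mul_assoc, h.mul_idempotent]

/-- The involution on the coefficients, transported from the involution `x ↦ m' * star x * m` of
the corner `e A e`. -/
@[reducible]
def starRing (h : IsCornerForm ε (matrixUnit φ o o 1) m m') : StarRing D where
  star d := φ (m' * star (matrixUnit φ o o d) * m) o o
  star_involutive d := matrixUnit_injective φ o o <| by
    rw [h.matrixUnit_apply_inv_mul_mul, h.matrixUnit_apply_inv_mul_mul,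
      h.inv_mul_star_mul_involutive, matrixUnit_mul_matrixUnit, matrixUnit_mul_matrixUnit,
      one_mul, mul_one]
  star_mul c d := matrixUnit_injective φ o o <| by
    rw [← matrixUnit_mul_matrixUnit φ o o o, ← matrixUnit_mul_matrixUnit φ o o o]
    simp only [h.matrixUnit_apply_inv_mul_mul]
    rw [h.inv_mul_star_mul_mul _ (by rw [matrixUnit_mul_matrixUnit, mul_one])]
  star_add c d := by
    simp only [matrixUnit_add, star_add, mul_add, add_mul, map_add, Matrix.add_apply]

theorem trivialStar (h : IsCornerForm (-1) (matrixUnit φ o o 1) m m')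
    (hskew : ∀ x, IsEpsHermitian (-1) (star (matrixUnit φ o o 1) * x * matrixUnit φ o o 1)) :
    letI := h.starRing
    TrivialStar D := by
  let := h.starRing
  refine ⟨fun d => matrixUnit_injective φ o o ?_⟩
  have hd : star (matrixUnit φ o o d) * m = m * matrixUnit φ o o d := by
    have hm := isEpsHermitian_neg_one_iff.mp (hskew (m * matrixUnit φ o o d))
    rwa [← mul_assoc (star _), h.star_idempotent_mul, mul_assoc, matrixUnit_mul_matrixUnit, mul_one,
      star_mul, isEpsHermitian_neg_one_iff.mp h.isEpsHermitian, mul_neg, neg_inj] at hm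
  calc matrixUnit φ o o (star d) = m' * star (matrixUnit φ o o d) * m :=
        h.matrixUnit_apply_inv_mul_mul _
    _ = matrixUnit φ o o d := by
        rw [mul_assoc, hd, ← mul_assoc, h.inv_mul, matrixUnit_mul_matrixUnit, one_mul]

end IsCornerForm

/-- The Gram matrix, in the basis of `A e` given by the matrix units, of the form
`(x, y) ↦ m' * star x * y` where `e` is the `(o, o)`-th matrix unit. -/
def cornerGram (φ : A ≃+* Matrix n n D) (o : n) (m' : A) : Matrix n n D :=
  of fun i j => φ (m' * star (matrixUnit φ i o 1)) o j

theorem cornerGram_mul_apply (x : A) (i j : n) :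
    (cornerGram φ o m' * φ x) i j = φ (m' * star (matrixUnit φ i o 1) * x) o j := by
  rw [map_mul, mul_apply, mul_apply]
  rfl

namespace IsCornerForm

theorem isUnit_cornerGram (h : IsCornerForm ε (matrixUnit φ o o 1) m m') :
    IsUnit (cornerGram φ o m') := by
  let G : Matrix n n D := of fun k i => φ (star (matrixUnit φ o i 1) * m) k o
  suffices hG : cornerGram φ o m' * G = 1 from ⟨⟨_, G, hG, mul_eq_one_comm.mp hG⟩, rfl⟩
  ext i j
  have hHG : (cornerGram φ o m' * G) i j =
      φ (m' * star (matrixUnit φ o j 1 * matrixUnit φ i o 1) * m) o o := by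
    rw [star_mul, ← mul_assoc m', mul_assoc _ _ m, map_mul, mul_apply, mul_apply]
    rfl
  rw [hHG]
  obtain rfl | hij := eq_or_ne i j
  · rw [matrixUnit_mul_matrixUnit, one_mul, mul_assoc, h.star_idempotent_mul, h.inv_mul]
    simp
  · have hzero : matrixUnit φ o j (1 : D) * matrixUnit φ i o 1 = 0 :=
      φ.injective (by simp [single_mul_single_of_ne, hij.symm])
    simp [hzero, hij]

theorem star_cornerGram_mul (h : IsCornerForm ε (matrixUnit φ o o 1) m m') (x : A) :
    letI := h.starRing
    star (cornerGram φ o m' * φ x) = ε • (cornerGram φ o m' * φ (star x)) := by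
  let := h.starRing
  have hm' : star m' = ε • m' := h.isEpsHermitian_inv
  ext i j
  have hentry : matrixUnit φ o o ((cornerGram φ o m' * φ x) j i) =
      m' * star (matrixUnit φ j o 1) * x * matrixUnit φ i o 1 := by
    have hcorner := matrixUnit_mul_mul_matrixUnit φ o o i o 1 1
      (m' * star (matrixUnit φ j o 1) * x)
    rw [one_mul, mul_one, ← cornerGram_mul_apply, ← mul_assoc, ← mul_assoc, h.idempotent_mul_inv]
      at hcorner
    exact hcorner.symm
  have hstar : m' * star (m' * star (matrixUnit φ j o 1) * x * matrixUnit φ i o 1) * m =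
      ε • (m' * star (matrixUnit φ i o 1) * star x * matrixUnit φ j o 1) := by
    simp only [star_mul, star_star, hm', mul_smul_comm, smul_mul_assoc, mul_assoc, h.inv_mul,
      matrixUnit_mul_matrixUnit, one_mul]
  calc star (cornerGram φ o m' * φ x) i j
      = φ (m' * star (matrixUnit φ o o ((cornerGram φ o m' * φ x) j i)) * m) o o := rfl
    _ = (ε • (cornerGram φ o m' * φ (star x))) i j := by
      rw [hentry, hstar, Matrix.smul_apply, cornerGram_mul_apply, Units.smul_def, map_zsmul,
        Matrix.smul_apply, map_mul, map_matrixUnit, mul_single_apply_same, mul_one]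
      rfl

end IsCornerForm

theorem exists_starRing_units_star_mul [Nonempty n] (φ : A ≃+* Matrix n n D) :
    ∃ (_ : StarRing D) (ε : ℤˣ) (h : (Matrix n n D)ˣ),
      (∀ x, star (h * φ x : Matrix n n D) = ε • (h * φ (star x) : Matrix n n D)) ∧
      (ε = 1 ∨ ε = -1 ∧ (2 : D) ≠ 0 ∧ TrivialStar D) := by
  obtain ⟨ε, m, m', h, hε⟩ := exists_isCornerForm φ (Classical.arbitrary n)
  obtain ⟨H, hH⟩ := h.isUnit_cornerGram
  refine ⟨h.starRing, ε, H, hH ▸ h.star_cornerGram_mul, hε.imp_right ?_⟩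
  rintro ⟨rfl, h2, hskew⟩
  exact ⟨rfl, h2, h.trivialStar hskew⟩

end MatrixUnits

/-! ### Matrix rings over a division ring with more than three elements -/

section DivisionRing

variable {D : Type*} [DivisionRing D]

theorem admitsUnits_one_of_encard_selfAdjoint_le [StarRing D] (hD : 3 < ENat.card D)
    (h : (selfAdjoint D : Set D).encard ≤ 3) {n : ℕ} (hn : 2 ≤ n) : AdmitsUnits (Fin n) D 1 := by
  have : Finite D := finite_of_finite_selfAdjoint (Set.finite_of_encard_le_coe h)
  obtain ⟨w, hw⟩ : ∃ w : D, star w ≠ w := by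
    by_contra! htriv
    have huniv : (selfAdjoint D : Set D) = Set.univ := Set.eq_univ_of_forall htriv
    exact (huniv ▸ h).not_gt (by rwa [Set.encard_univ])
  let : Field D := littleWedderburn D
  exact admitsUnits_of_star_ne hw hD hn

theorem admitsUnit_one_of_not_isUnit [StarRing D] (hD : 3 < ENat.card D) {n : ℕ}
    {a b : Matrix (Fin n) (Fin n) D} (ha : IsEpsHermitian 1 a) (hb : IsEpsHermitian 1 b)
    (ha' : ¬ IsUnit a) (hb' : ¬ IsUnit b) : AdmitsUnit 1 a b := by
  obtain h | h := lt_or_ge 3 (selfAdjoint D : Set D).encard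
  · exact admitsUnits_one_of_three_lt_encard h n a b ha hb
  obtain rfl | rfl | hn : n = 0 ∨ n = 1 ∨ 2 ≤ n := by lia
  · exact .of_isEmpty a b
  · have hzero {c : Matrix (Fin 1) (Fin 1) D} (hc : ¬ IsUnit c) : c = 0 := by
      rw [← MulEquiv.isUnit_map (uniqueRingEquiv : Matrix (Fin 1) (Fin 1) D ≃+* D),
        isUnit_iff_ne_zero, not_not] at hc
      exact uniqueRingEquiv.map_eq_zero_iff.mp hc
    rw [hzero ha', hzero hb']
    exact .zero_zero
  · exact admitsUnits_one_of_encard_selfAdjoint_le hD h hn a b ha hb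

variable {A : Type*} [Ring A] [StarRing A]

theorem admitsUnit_of_ringEquiv_matrix (hD : 3 < ENat.card D) {n : ℕ} [NeZero n]
    (φ : A ≃+* Matrix (Fin n) (Fin n) D) {a b : A} (ha : star a = a) (hb : star b = b)
    (ha' : ¬ IsUnit a) (hb' : ¬ IsUnit b) : AdmitsUnit 1 a b := by
  obtain ⟨_, ε, h, hφ, hε⟩ := exists_starRing_units_star_mul φ
  have hherm {x : A} (hx : star x = x) : IsEpsHermitian ε (h * φ x : Matrix (Fin n) (Fin n) D) := by
    rw [IsEpsHermitian, hφ, hx]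
  have hh : IsEpsHermitian ε (h : Matrix (Fin n) (Fin n) D) := by
    simpa using hherm (star_one A)
  have hb_herm : IsEpsHermitian ε (φ b * (↑h⁻¹ : Matrix (Fin n) (Fin n) D)) := by
    have hinv : star (↑h⁻¹ : Matrix (Fin n) (Fin n) D) = ε • ↑h⁻¹ := hh.units_inv
    have hconj := (hherm hb).mul_mul_star (↑h⁻¹ : Matrix (Fin n) (Fin n) D)
    rw [Units.inv_mul_cancel_left, hinv, mul_smul_comm, IsEpsHermitian, star_sign_smul] at hconj
    exact smul_left_cancel ε hconj
  refine .of_twisted_ringEquiv φ h hφ ?_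
  rw [mul_one]
  obtain rfl | ⟨rfl, h2, _⟩ := hε
  · refine admitsUnit_one_of_not_isUnit hD (hherm ha) hb_herm ?_ ?_
    · rwa [Units.isUnit_units_mul, MulEquiv.isUnit_map]
    · rwa [Units.isUnit_mul_units, MulEquiv.isUnit_map]
  · obtain ⟨k, rfl⟩ := (even_of_isUnit_of_isEpsHermitian_neg_one h2 h.isUnit hh).two_dvd
    exact admitsUnits_neg_one_of_trivialStar h2 hD k _ _ (hherm ha) hb_herm

end DivisionRing

/-- Let `A` be a simple artinian ring with involution `*` that is
either infinite or isomorphic to the full matrix ring over `F_q` with `q > 3`.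
If `a, b` are symmetric non-units, then there is a symmetric unit `u` with
`a + u` and `b − u⁻¹` units. -/
theorem exists_symmetric_unit_add_sub_isUnit (A : Type*) [Ring A] [StarRing A]
    [IsSimpleRing A] [IsArtinianRing A]
    (hA : Infinite A ∨ ∃ (n : ℕ) (K : Type) (_ : Field K) (_ : Fintype K),
      3 < Fintype.card K ∧ Nonempty (A ≃+* Matrix (Fin n) (Fin n) K))
    (a b : A) (ha : star a = a) (hb : star b = b)
    (ha' : ¬ IsUnit a) (hb' : ¬ IsUnit b) :
    ∃ u : Aˣ, star (u : A) = (u : A) ∧ IsUnit (a + u) ∧ IsUnit (b - (↑u⁻¹ : A)) := by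
  suffices h : AdmitsUnit 1 a b by simpa only [AdmitsUnit, isEpsHermitian_one_iff] using h
  obtain hinf | ⟨n, K, _, _, hK, ⟨φ⟩⟩ := hA
  · obtain ⟨n, _, D, _, ⟨φ⟩⟩ := IsSimpleRing.exists_ringEquiv_matrix_divisionRing A
    have : Infinite D := by
      by_contra hD
      have : Finite D := not_infinite_iff_finite.mp hD
      exact hinf.not_finite (Finite.of_equiv _ φ.symm.toEquiv)
    exact admitsUnit_of_ringEquiv_matrix (by simpa using ENat.natCast_lt_top 3) φ ha hb ha' hb'
  · have : NeZero n := ⟨by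
      rintro rfl
      exact not_subsingleton A φ.injective.subsingleton⟩
    exact admitsUnit_of_ringEquiv_matrix (by simpa using mod_cast hK) φ ha hb ha' hb'
end

section
/- Assume 2 is invertible in A. For all Lagrangians L, L', L'' of W one has the composition formula γ_{L'',L'} ∘ γ_{L',L} = sqrt( |L''∩L'| / (|L∩L''| · |L'∩L| · |L|) ) · S_W(L; L', L'') · γ_{L'',L}, where S_W(L; L', L'') = Σ_{ζ ∈ L ∩ (L' + L'')} χ(ζ', ζ''), each ζ ∈ L ∩ (L' + L'') being written as ζ = ζ' + ζ'' with ζ' ∈ L', ζ'' ∈ L''. -/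
/-- The set `SL_*(2,A)` for a ring with involution `(A, *)`. -/
def SLstarSet (A : Type*) [Ring A] [StarRing A] : Set (Matrix (Fin 2) (Fin 2) A) :=
  {g | g 0 0 * star (g 0 1) = g 0 1 * star (g 0 0) ∧
       g 1 0 * star (g 1 1) = g 1 1 * star (g 1 0) ∧
       star (g 0 0) * g 1 0 = star (g 1 0) * g 0 0 ∧
       star (g 0 1) * g 1 1 = star (g 1 1) * g 0 1 ∧
       g 0 0 * star (g 1 1) - g 0 1 * star (g 1 0) = 1 ∧
       star (g 0 0) * g 1 1 - star (g 1 0) * g 0 1 = 1}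

/-- Action of a 2×2 matrix over `A` on `W = S ⊕ S` by matrix multiplication. -/
def matAct {A S : Type*} [Ring A] [AddCommGroup S] [Module A S]
    (g : Matrix (Fin 2) (Fin 2) A) (v : S × S) : S × S :=
  (g 0 0 • v.1 + g 0 1 • v.2, g 1 0 • v.1 + g 1 1 • v.2)

/-- The explicit inverse `[[d*, −b*],[−c*, a*]]` of `g = [[a,b],[c,d]] ∈ SL_*(2,A)`. -/
def invStar {A : Type*} [Ring A] [StarRing A] (g : Matrix (Fin 2) (Fin 2) A) :
    Matrix (Fin 2) (Fin 2) A :=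
  !![star (g 1 1), -star (g 0 1); -star (g 1 0), star (g 0 0)]

/-- The symplectic form `B((s,t),(s',t')) = η(s,t') − η(t,s')` on `W = S ⊕ S`. -/
def symplForm {k S : Type*} [Field k] [AddCommGroup S] [Module k S]
    (η : S →ₗ[k] S →ₗ[k] k) (v w : S × S) : k :=
  η v.1 w.2 - η v.2 w.1

/-- A Lagrangian: a right `A`-submodule `L` of `W = S ⊕ S` (right action
`u·a = (a*·u₁, a*·u₂)`) with `L = L^⊥` for the symplectic form. -/
def IsLagrangian {k A S : Type*} [Field k] [AddCommGroup S] [Module k S]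
    [Ring A] [StarRing A] [Module A S]
    (η : S →ₗ[k] S →ₗ[k] k) (L : Set (S × S)) : Prop :=
  (0 : S × S) ∈ L ∧ (∀ u ∈ L, ∀ v ∈ L, u + v ∈ L) ∧
  (∀ a : A, ∀ u ∈ L, ((star a • u.1, star a • u.2) : S × S) ∈ L) ∧
  L = {w | ∀ u ∈ L, symplForm η u w = 0}

/-- The fiber `𝓔_L = {f : W → ℂ | f(w + ζ) = χ(w,ζ) f(w), ζ ∈ L}`, `χ = ψ ∘ B`. -/
def fiberE {k S : Type*} [Field k] [AddCommGroup S] [Module k S]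
    (η : S →ₗ[k] S →ₗ[k] k) (ψ : AddChar k ℂ) (L : Set (S × S)) : Set ((S × S) → ℂ) :=
  {f | ∀ (w ζ : S × S), ζ ∈ L → f (w + ζ) = ψ (symplForm η w ζ) * f w}

/-- The inner product `⟨f, h⟩ = Σ_{w ∈ W} f(w) conj(h(w))`. -/
noncomputable def innerE {S : Type*} (f h : (S × S) → ℂ) : ℂ :=
  ∑ᶠ w : S × S, f w * (starRingEnd ℂ) (h w)

/-- The connection map `γ_{L',L} : 𝓔_L → 𝓔_{L'}`,
`(γ_{L',L} f)(w) = (|L|·|L∩L'|)^{-1/2} Σ_{ζ' ∈ L'} conj(χ(w,ζ')) f(w + ζ')`. -/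
noncomputable def gammaMap {k S : Type*} [Field k] [AddCommGroup S] [Module k S]
    (η : S →ₗ[k] S →ₗ[k] k) (ψ : AddChar k ℂ) (L' L : Set (S × S))
    (f : (S × S) → ℂ) : (S × S) → ℂ :=
  fun w => ((Real.sqrt ((Nat.card ↥L : ℝ) * (Nat.card ↥(L ∩ L') : ℝ)) : ℂ))⁻¹ *
    ∑ᶠ ζ' ∈ L', (starRingEnd ℂ) (ψ (symplForm η w ζ')) * f (w + ζ')

/-- The operator `τ_g`, `(τ_g f)(w) = f(g⁻¹·w)`. -/
def tauMap {A S : Type*} [AddCommGroup S]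
    [Ring A] [StarRing A] [Module A S]
    (g : Matrix (Fin 2) (Fin 2) A) (f : (S × S) → ℂ) : (S × S) → ℂ :=
  fun w => f (matAct (invStar g) w)

/-!
Let `(τ_w f)(z) = χ(w, z)⁻¹ f(w + z)` be the twisted translate of `f`. Up to normalisation
`(γ_{L',L} f)(w)` is the sum of `τ_w f` over `L'`, and twisted translations compose up to a phase
(the Weyl relation), so everything reduces to evaluating, for `g = τ_w f ∈ 𝓔_L`, the double sum
of `χ(z, y) g(z + y)` over `z ∈ L'` and `y ∈ L''`.

For fixed `z` the inner sum is multiplied by `χ(z, m)²` under the substitution `y ↦ y + m`,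
`m ∈ L ∩ L''`. As `2` is invertible, it vanishes unless `z ∈ (L ∩ L'')^⊥ = L + L''`, and if
`z - l ∈ L''` with `l ∈ L`, the substitution `y ↦ y - (z - l)` shows that it equals
`χ(z, l)` times the sum of `g` over `L''`. It remains to count the pairs `(z, l) ∈ L' × L` with
`z - l ∈ L''`: a given `z` occurs in `|L ∩ L''|` of them or in none, and a given `l` in
`|L' ∩ L''|` of them, all with the same phase `χ(z, l)`, or in none.
-/

open scoped ComplexConjugate
open LinearMap (BilinForm)

section Counting

variable {K W : Type*} [Ring K] [AddCommGroup W] [Module K W] {M P : Submodule K W} {x : W}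

theorem natCard_subtype_sub_mem (hx : x ∈ M ⊔ P) :
    Nat.card {m : M // x - m ∈ P} = Nat.card ↥(M ⊓ P) := by
  obtain ⟨m₀, hm₀, p₀, hp₀, rfl⟩ := Submodule.mem_sup.1 hx
  have sub_mem_iff (m : W) : m₀ + p₀ - m ∈ P ↔ m - m₀ ∈ P := by
    rw [show m₀ + p₀ - m = p₀ - (m - m₀) by abel, P.sub_mem_iff_right hp₀]
  exact Nat.card_congr
    { toFun := fun m => ⟨m.1 - m₀, M.sub_mem m.1.2 hm₀, (sub_mem_iff _).1 m.2⟩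
      invFun := fun n => ⟨⟨n.1 + m₀, M.add_mem n.2.1 hm₀⟩,
        (sub_mem_iff _).2 (by simpa using n.2.2)⟩
      left_inv := fun m => by simp
      right_inv := fun n => by simp }

open Classical in
theorem sum_ite_sub_mem_eq {R : Type*} [NonAssocSemiring R] [Fintype M] {F : W → R} {c : R}
    (hF : ∀ m ∈ M, x - m ∈ P → F m = c) :
    (∑ m : M, if x - m ∈ P then F m else 0)
      = if x ∈ M ⊔ P then (Nat.card ↥(M ⊓ P) : R) * c else 0 := by
  split_ifs with hx
  · rw [← natCard_subtype_sub_mem hx, Nat.card_eq_fintype_card, Fintype.card_subtype,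
      ← nsmul_eq_mul, ← Finset.sum_const, ← Finset.sum_filter]
    exact Finset.sum_congr rfl fun m hm => hF m m.2 (Finset.mem_filter.1 hm).2
  · refine Finset.sum_eq_zero fun m _ => if_neg fun hm => hx ?_
    exact Submodule.mem_sup.2 ⟨m, m.2, x - m, hm, add_sub_cancel _ _⟩

end Counting

section SubmoduleSums

variable {K W R : Type*} [Semiring K] [AddCommMonoid W] [Module K W] [AddCommMonoid R]

theorem mem_inf_sup_iff_exists_eq_add {M P Q : Submodule K W} {x : W} :
    x ∈ M ⊓ (P ⊔ Q) ↔ x ∈ M ∧ ∃ a ∈ P, ∃ b ∈ Q, x = a + b := by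
  simp only [Submodule.mem_inf, Submodule.mem_sup, eq_comm]

theorem finsum_mem_eq_sum_coe {ι σ : Type*} [SetLike σ ι] (M : σ) [Fintype M] (F : ι → R) :
    ∑ᶠ x ∈ M, F x = ∑ x : M, F x := by
  rw [← finsum_eq_sum_of_fintype]
  exact (finsum_subtype_eq_finsum_cond (· ∈ M)).symm

open Classical in
theorem finsum_mem_inf_eq_sum_ite (M P : Submodule K W) [Fintype M] (F : W → R) :
    ∑ᶠ x ∈ M ⊓ P, F x = ∑ x : M, if (x : W) ∈ P then F x else 0 := by
  rw [← finsum_mem_eq_sum_coe M fun x => if x ∈ P then F x else 0]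
  refine finsum_congr fun x => ?_
  by_cases hM : x ∈ M <;> by_cases hP : x ∈ P <;> simp [hM, hP]

end SubmoduleSums

section BilinearForms

theorem bilin_eq_of_add_eq_add {K W : Type*} [CommRing K] [AddCommGroup W] [Module K W]
    {B : BilinForm K W} {M P : Submodule K W} (hM : M ≤ B.orthogonal M)
    (hP : P ≤ B.orthogonal P) {a a' b b' : W} (ha : a ∈ M) (ha' : a' ∈ M) (hb : b ∈ P)
    (hb' : b' ∈ P) (hab : a + b = a' + b') : B a b = B a' b' := by
  have diff_eq : a - a' = b' - b := by rw [sub_eq_sub_iff_add_eq_add, hab, add_comm]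
  have hM_zero : B a (a - a') = 0 := hM (M.sub_mem ha ha') a ha
  have hP_zero : B (b' - b) b' = 0 := hP hb' _ (P.sub_mem hb' hb)
  rw [diff_eq, map_sub] at hM_zero
  rw [← diff_eq, map_sub, LinearMap.sub_apply] at hP_zero
  linear_combination hP_zero - hM_zero

variable {k W : Type*} [Field k] [AddCommGroup W] [Module k W] {B : BilinForm k W}

theorem bilin_orthogonal_inf [FiniteDimensional k W] (hnd : B.Nondegenerate) (hB : B.IsRefl)
    (M P : Submodule k W) : B.orthogonal (M ⊓ P) = B.orthogonal M ⊔ B.orthogonal P := by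
  refine le_antisymm ?_ (sup_le (BilinForm.orthogonal_le inf_le_left)
    (BilinForm.orthogonal_le inf_le_right))
  rw [← BilinForm.orthogonal_orthogonal hnd hB (B.orthogonal M ⊔ B.orthogonal P)]
  refine BilinForm.orthogonal_le (le_inf ?_ ?_)
  · exact (BilinForm.orthogonal_le le_sup_left).trans_eq (BilinForm.orthogonal_orthogonal hnd hB M)
  · exact (BilinForm.orthogonal_le le_sup_right).trans_eq
      (BilinForm.orthogonal_orthogonal hnd hB P)

theorem natCard_eq_of_orthogonal_eq_self [FiniteDimensional k W] (hnd : B.Nondegenerate)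
    {L L' : Submodule k W} (hL : B.orthogonal L = L) (hL' : B.orthogonal L' = L') :
    Nat.card L = Nat.card L' := by
  have hrank := BilinForm.finrank_orthogonal hnd L
  have hrank' := BilinForm.finrank_orthogonal hnd L'
  rw [hL] at hrank
  rw [hL'] at hrank'
  have hle := L.finrank_le
  have hle' := L'.finrank_le
  rw [Module.natCard_eq_pow_finrank (K := k) (V := L),
    Module.natCard_eq_pow_finrank (K := k) (V := L')]
  congr 1
  omega

theorem linearMap_eq_zero_of_addChar_comp_eq_one {R : Type*} [CommMonoid R] {ψ : AddChar k R}
    (hψ : ψ ≠ 1) {φ : W →ₗ[k] k} (hφ : ∀ x, ψ (φ x) = 1) : φ = 0 := by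
  by_contra hne
  obtain ⟨c, hc⟩ := AddChar.ne_one_iff.1 hψ
  obtain ⟨x, rfl⟩ := LinearMap.surjective hne c
  exact hc (hφ x)

theorem linearMap_apply_eq_zero_of_mul_eq_zero {c : k} (hc : IsSMulRegular W c)
    {φ : W →ₗ[k] k} {x : W} (h : c * φ x = 0) : φ x = 0 := by
  rcases mul_eq_zero.1 h with rfl | hx
  · have := hc.subsingleton
    rw [Subsingleton.elim x 0, map_zero]
  · exact hx

end BilinearForms

section TwistedTranslates

variable {K W R : Type*} [CommRing K] [AddCommGroup W] [Module K W] [CommRing R]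

/-- The defining property of the fiber `𝓔_L`, for an arbitrary bilinear form in place of the
symplectic form on `S ⊕ S`. -/
def IsQuasiperiodic (B : BilinForm K W) (ψ : AddChar K R) (L : Submodule K W) (f : W → R) :
    Prop :=
  ∀ w ζ : W, ζ ∈ L → f (w + ζ) = ψ (B w ζ) * f w

/-- The twisted translate `τ_w f`, that is, the action of `w` on functions through the
Heisenberg group of `B`. The connection map sums it over a Lagrangian. -/
def twistedTranslate (B : BilinForm K W) (ψ : AddChar K R) (w : W) (f : W → R) : W → R :=
  fun z => ψ (-B w z) * f (w + z)

variable {B : BilinForm K W} {ψ : AddChar K R} {f : W → R}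

theorem twistedTranslate_twistedTranslate (y w z : W) :
    twistedTranslate B ψ y (twistedTranslate B ψ w f) z
      = ψ (-B w y) * twistedTranslate B ψ (w + y) f z := by
  simp only [twistedTranslate, ← mul_assoc, ← AddChar.map_add_eq_mul, map_add,
    LinearMap.add_apply, ← add_assoc]
  congr 2
  ring

theorem IsQuasiperiodic.twistedTranslate {L : Submodule K W} (hf : IsQuasiperiodic B ψ L f)
    (w : W) : IsQuasiperiodic B ψ L (twistedTranslate B ψ w f) := by
  intro z ζ hζ
  simp only [_root_.twistedTranslate, ← add_assoc, hf _ ζ hζ, ← mul_assoc,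
    ← AddChar.map_add_eq_mul, map_add, LinearMap.add_apply]
  congr 2
  ring

variable {L P : Submodule K W} [Fintype P] {g : W → R}

theorem sum_twistedTranslate_eq_addChar_mul (hB : B.IsAlt) (hP : P ≤ B.orthogonal P)
    (hg : IsQuasiperiodic B ψ L g) (z : W) {m : W} (hm : m ∈ L ⊓ P) :
    ∑ y : P, twistedTranslate B ψ y g z
      = ψ (2 * B z m) * ∑ y : P, twistedTranslate B ψ y g z := by
  rw [Finset.mul_sum, ← Equiv.sum_comp (Equiv.addRight (⟨m, hm.2⟩ : P))]
  refine Finset.sum_congr rfl fun y _ => ?_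
  have hym : B y m = 0 := hP hm.2 y y.2
  have hmz : -B m z = B z m := hB.neg_eq m z
  simp only [twistedTranslate, Equiv.coe_addRight, Submodule.coe_add]
  rw [add_right_comm, hg _ m hm.1, ← mul_assoc, ← mul_assoc, ← AddChar.map_add_eq_mul,
    ← AddChar.map_add_eq_mul]
  congr 2
  simp only [map_add, LinearMap.add_apply]
  linear_combination hym + hmz

theorem sum_twistedTranslate_of_sub_mem (hB : B.IsAlt) (hP : P ≤ B.orthogonal P)
    (hg : IsQuasiperiodic B ψ L g) {z l : W} (hl : l ∈ L) (hzl : z - l ∈ P) :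
    ∑ y : P, twistedTranslate B ψ y g z = ψ (B z l) * ∑ y : P, g y := by
  rw [Finset.mul_sum, ← Equiv.sum_comp (Equiv.subRight (⟨z - l, hzl⟩ : P))]
  refine Finset.sum_congr rfl fun y _ => ?_
  have hyzl : B y (z - l) = 0 := hP hzl y y.2
  have hlz : -B l z = B z l := hB.neg_eq l z
  have hzz : B z z = 0 := hB z
  simp only [twistedTranslate, Equiv.subRight_apply, Submodule.coe_sub]
  rw [show (y : W) - (z - l) + z = y + l by abel, hg _ l hl, ← mul_assoc,
    ← AddChar.map_add_eq_mul]
  congr 2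
  simp only [map_sub, LinearMap.sub_apply] at hyzl ⊢
  linear_combination hzz + hlz - hyzl

end TwistedTranslates

section DoubleSum

variable {k W R : Type*} [Field k] [AddCommGroup W] [Module k W] [CommRing R]
  {B : BilinForm k W} {ψ : AddChar k R} {L L' L'' : Submodule k W} {g : W → R}

theorem mem_sup_of_sum_twistedTranslate_ne_zero [FiniteDimensional k W] [IsDomain R]
    [Fintype L''] (hB : B.IsAlt) (hnd : B.Nondegenerate) (h2 : IsSMulRegular W (2 : k))
    (hψ : ψ ≠ 1) (hL : B.orthogonal L = L) (hL'' : B.orthogonal L'' = L'')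
    (hg : IsQuasiperiodic B ψ L g) {z : W}
    (hz : ∑ y : L'', twistedTranslate B ψ y g z ≠ 0) : z ∈ L ⊔ L'' := by
  have phase_eq_one (m : ↥(L ⊓ L'')) : ψ (2 * B z m) = 1 :=
    (mul_eq_right₀ hz).1 (sum_twistedTranslate_eq_addChar_mul hB hL''.ge hg z m.2).symm
  have two_smul_eq_zero : (2 : k) • (B z).domRestrict (L ⊓ L'') = 0 :=
    linearMap_eq_zero_of_addChar_comp_eq_one hψ phase_eq_one
  suffices z ∈ B.orthogonal (L ⊓ L'') by rwa [bilin_orthogonal_inf hnd hB.isRefl, hL, hL''] at this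
  intro m hm
  refine hB.isRefl _ _ (linearMap_apply_eq_zero_of_mul_eq_zero h2 ?_)
  exact LinearMap.congr_fun two_smul_eq_zero ⟨m, hm⟩

open Classical in
theorem natCard_mul_sum_twistedTranslate [FiniteDimensional k W] [IsDomain R] [Fintype L]
    [Fintype L''] (hB : B.IsAlt) (hnd : B.Nondegenerate) (h2 : IsSMulRegular W (2 : k))
    (hψ : ψ ≠ 1) (hL : B.orthogonal L = L) (hL'' : B.orthogonal L'' = L'')
    (hg : IsQuasiperiodic B ψ L g) (z : W) :
    (Nat.card ↥(L ⊓ L'') : R) * ∑ y : L'', twistedTranslate B ψ y g z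
      = (∑ l : L, if z - l ∈ L'' then ψ (B z l) else 0) * ∑ y : L'', g y := by
  simp only [Finset.sum_mul, ite_mul, zero_mul]
  rw [sum_ite_sub_mem_eq (F := fun l => ψ (B z l) * ∑ y : L'', g y) fun l hl hzl =>
    (sum_twistedTranslate_of_sub_mem hB hL''.ge hg hl hzl).symm]
  split_ifs with hz
  · rfl
  · rw [not_imp_comm.1 (mem_sup_of_sum_twistedTranslate_ne_zero hB hnd h2 hψ hL hL'' hg) hz,
      mul_zero]

open Classical in
theorem sum_sum_ite_sub_mem_eq_natCard_mul [Fintype L] [Fintype L'] (hB : B.IsAlt)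
    (hL' : L' ≤ B.orthogonal L') (hL'' : L'' ≤ B.orthogonal L'') {d : W → W × W}
    (hd : ∀ ζ ∈ L ⊓ (L' ⊔ L''), (d ζ).1 ∈ L' ∧ (d ζ).2 ∈ L'' ∧ (d ζ).1 + (d ζ).2 = ζ) :
    (∑ z : L', ∑ l : L, if (z : W) - l ∈ L'' then ψ (B z l) else 0)
      = (Nat.card ↥(L' ⊓ L'') : R) * ∑ᶠ ζ ∈ L ⊓ (L' ⊔ L''), ψ (B (d ζ).1 (d ζ).2) := by
  rw [finsum_mem_inf_eq_sum_ite, Finset.sum_comm, Finset.mul_sum]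
  refine Finset.sum_congr rfl fun l _ => ?_
  have phase_eq (z : W) (hz : z ∈ L') (hlz : (l : W) - z ∈ L'') :
      ψ (B z l) = ψ (B (d l).1 (d l).2) := by
    have hsum : z + (l - z) = (l : W) := add_sub_cancel _ _
    obtain ⟨hd₁, hd₂, hd_sum⟩ := hd l ⟨l.2, Submodule.mem_sup.2 ⟨z, hz, _, hlz, hsum⟩⟩
    rw [← bilin_eq_of_add_eq_add hL' hL'' hz hd₁ hlz hd₂ (hsum.trans hd_sum.symm), map_sub,
      hB z, sub_zero]
  simp only [← neg_sub (l : W), neg_mem_iff]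
  rw [sum_ite_sub_mem_eq (F := fun z => ψ (B z l)) phase_eq, mul_ite, mul_zero]

theorem natCard_mul_sum_sum_twistedTranslate [FiniteDimensional k W] [IsDomain R] [Finite L]
    [Fintype L'] [Fintype L''] (hB : B.IsAlt) (hnd : B.Nondegenerate)
    (h2 : IsSMulRegular W (2 : k)) (hψ : ψ ≠ 1) (hL : B.orthogonal L = L)
    (hL' : L' ≤ B.orthogonal L') (hL'' : B.orthogonal L'' = L'') {d : W → W × W}
    (hd : ∀ ζ ∈ L ⊓ (L' ⊔ L''), (d ζ).1 ∈ L' ∧ (d ζ).2 ∈ L'' ∧ (d ζ).1 + (d ζ).2 = ζ)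
    (hg : IsQuasiperiodic B ψ L g) :
    (Nat.card ↥(L ⊓ L'') : R) * ∑ y : L'', ∑ z : L', twistedTranslate B ψ y g z
      = Nat.card ↥(L' ⊓ L'') * (∑ᶠ ζ ∈ L ⊓ (L' ⊔ L''), ψ (B (d ζ).1 (d ζ).2))
        * ∑ y : L'', g y := by
  classical
  have := Fintype.ofFinite L
  rw [Finset.sum_comm, Finset.mul_sum, ← sum_sum_ite_sub_mem_eq_natCard_mul hB hL' hL''.ge hd,
    Finset.sum_mul]
  exact Finset.sum_congr rfl fun z _ =>
    natCard_mul_sum_twistedTranslate hB hnd h2 hψ hL hL'' hg z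

end DoubleSum

section ConnectionMaps

variable {k W : Type*} [Field k] [AddCommGroup W] [Module k W]

/-- The connection map `γ_{L',L}` of an arbitrary bilinear form; `gammaMap` is, definitionally,
the case of the symplectic form on `S ⊕ S`. -/
noncomputable def connectionMap (B : BilinForm k W) (ψ : AddChar k ℂ) (L' L : Submodule k W)
    (f : W → ℂ) : W → ℂ :=
  fun w => ((Real.sqrt ((Nat.card L : ℝ) * (Nat.card ↥(L ⊓ L') : ℝ)) : ℂ))⁻¹ *
    ∑ᶠ ζ ∈ L', conj (ψ (B w ζ)) * f (w + ζ)

theorem connectionMap_apply [Finite k] (B : BilinForm k W) (ψ : AddChar k ℂ)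
    (L' L : Submodule k W) [Fintype L'] (f : W → ℂ) (w : W) :
    connectionMap B ψ L' L f w
      = (Real.sqrt ((Nat.card L : ℝ) * (Nat.card ↥(L ⊓ L') : ℝ)) : ℂ)⁻¹ *
        ∑ ζ : L', twistedTranslate B ψ w f ζ := by
  simp only [connectionMap, twistedTranslate, ← AddChar.map_neg_eq_conj,
    finsum_mem_eq_sum_coe]

theorem connectionMap_connectionMap_apply [Finite k] (B : BilinForm k W) (ψ : AddChar k ℂ)
    (L L' L'' : Submodule k W) [Fintype L'] [Fintype L''] (f : W → ℂ) (w : W) :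
    connectionMap B ψ L'' L' (connectionMap B ψ L' L f) w
      = (Real.sqrt ((Nat.card L' : ℝ) * (Nat.card ↥(L' ⊓ L'') : ℝ)) : ℂ)⁻¹ *
        ((Real.sqrt ((Nat.card L : ℝ) * (Nat.card ↥(L ⊓ L') : ℝ)) : ℂ)⁻¹ *
          ∑ y : L'', ∑ z : L', twistedTranslate B ψ y (twistedTranslate B ψ w f) z) := by
  rw [connectionMap_apply]
  congr 1
  rw [Finset.mul_sum]
  refine Finset.sum_congr rfl fun y _ => ?_
  rw [twistedTranslate, connectionMap_apply, mul_left_comm, Finset.mul_sum]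
  simp only [twistedTranslate_twistedTranslate]

theorem inv_sqrt_mul_inv_sqrt_mul_eq {n a b c : ℝ} (hn : 0 < n) (ha : 0 < a) (hb : 0 < b)
    (hc : 0 < c) :
    (√(n * a))⁻¹ * (√(n * b))⁻¹ * a = √(a / (c * b * n)) * (√(n * c))⁻¹ * c := by
  have hna : √(n * a) = √n * √a := Real.sqrt_mul hn.le a
  have hnb : √(n * b) = √n * √b := Real.sqrt_mul hn.le b
  have hnc : √(n * c) = √n * √c := Real.sqrt_mul hn.le c
  have hcbn : √(a / (c * b * n)) = √a / (√c * √b * √n) := by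
    rw [Real.sqrt_div ha.le, Real.sqrt_mul (by positivity), Real.sqrt_mul hc.le]
  rw [hna, hnb, hnc, hcbn]
  field_simp
  rw [Real.sq_sqrt ha.le, Real.sq_sqrt hc.le]

theorem gammaMap_composition_formula_general [Finite k] [FiniteDimensional k W]
    {B : BilinForm k W} (hB : B.IsAlt) (hnd : B.Nondegenerate) (h2 : IsSMulRegular W (2 : k))
    {ψ : AddChar k ℂ} (hψ : ψ ≠ 1) {L L' L'' : Submodule k W} (hL : B.orthogonal L = L)
    (hL' : B.orthogonal L' = L') (hL'' : B.orthogonal L'' = L'') {d : W → W × W}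
    (hd : ∀ ζ ∈ L ⊓ (L' ⊔ L''), (d ζ).1 ∈ L' ∧ (d ζ).2 ∈ L'' ∧ (d ζ).1 + (d ζ).2 = ζ)
    {f : W → ℂ} (hf : IsQuasiperiodic B ψ L f) (w : W) :
    connectionMap B ψ L'' L' (connectionMap B ψ L' L f) w
      = (Real.sqrt ((Nat.card ↥(L'' ⊓ L') : ℝ) /
            ((Nat.card ↥(L ⊓ L'') : ℝ) * (Nat.card ↥(L' ⊓ L) : ℝ) * (Nat.card L : ℝ))) : ℂ)
        * (∑ᶠ ζ ∈ L ⊓ (L' ⊔ L''), ψ (B (d ζ).1 (d ζ).2))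
        * connectionMap B ψ L'' L f w := by
  have : Finite W := Module.finite_of_finite k
  have (M : Submodule k W) : Fintype M := Fintype.ofFinite M
  have natCard_pos (M : Submodule k W) : (0 : ℝ) < Nat.card M := mod_cast Nat.card_pos
  have hcard : (Nat.card ↥(L ⊓ L'') : ℂ) ≠ 0 := mod_cast Nat.card_pos.ne'
  have hsum := natCard_mul_sum_sum_twistedTranslate hB hnd h2 hψ hL hL'.ge hL'' hd
    (hf.twistedTranslate w)
  have hconst := congrArg Complex.ofReal (inv_sqrt_mul_inv_sqrt_mul_eq (natCard_pos L)
    (natCard_pos (L' ⊓ L'')) (natCard_pos (L ⊓ L')) (natCard_pos (L ⊓ L'')))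
  push_cast at hconst
  rw [connectionMap_connectionMap_apply, connectionMap_apply,
    ← natCard_eq_of_orthogonal_eq_self hnd hL hL', inf_comm L'' L', inf_comm L' L]
  refine mul_left_cancel₀ hcard ?_
  rw [mul_left_comm, mul_left_comm (Nat.card ↥(L ⊓ L'') : ℂ) _⁻¹, hsum]
  linear_combination (∑ᶠ ζ ∈ L ⊓ (L' ⊔ L''), ψ (B (d ζ).1 (d ζ).2)) *
    (∑ y : L'', twistedTranslate B ψ w f y) * hconst

end ConnectionMaps

section SymplecticForm

variable {k S : Type*} [Field k] [AddCommGroup S] [Module k S] {η : S →ₗ[k] S →ₗ[k] k}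

/-- `symplForm` bundled as a bilinear form, definitionally equal to it when applied. -/
def symplBilin (η : S →ₗ[k] S →ₗ[k] k) : BilinForm k (S × S) :=
  η.compl₁₂ (.fst k S S) (.snd k S S) - η.compl₁₂ (.snd k S S) (.fst k S S)

theorem symplBilin_isAlt (hsymm : ∀ s t, η s t = η t s) : (symplBilin η).IsAlt :=
  fun v => sub_eq_zero.2 (hsymm v.1 v.2)

theorem symplBilin_nondegenerate (hsymm : ∀ s t, η s t = η t s)
    (hnondeg : ∀ s, (∀ t, η s t = 0) → s = 0) : (symplBilin η).Nondegenerate := by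
  have separating (v : S × S) (hv : ∀ u, symplBilin η v u = 0) : v = 0 :=
    Prod.ext (hnondeg _ fun t => by simpa [symplBilin] using hv (0, t))
      (hnondeg _ fun t => by simpa [symplBilin] using hv (t, 0))
  exact ⟨separating, fun v hv =>
    separating v fun u => (symplBilin_isAlt hsymm).isRefl _ _ (hv u)⟩

variable {A : Type*} [Ring A] [Algebra k A] [StarRing A] [Module A S] [IsScalarTower k A S]

theorem IsLagrangian.exists_submodule
    (hstark : ∀ c : k, star (algebraMap k A c) = algebraMap k A c)
    {L : Set (S × S)} (hL : IsLagrangian (A := A) η L) :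
    ∃ N : Submodule k (S × S), (N : Set (S × S)) = L ∧ (symplBilin η).orthogonal N = N := by
  obtain ⟨zero_mem, add_mem, star_smul_mem, eq_orthogonal⟩ := hL
  have smul_mem (c : k) (u : S × S) (hu : u ∈ L) : c • u ∈ L := by
    have hcu := star_smul_mem (algebraMap k A c) u hu
    rwa [hstark, algebraMap_smul, algebraMap_smul] at hcu
  let N : Submodule k (S × S) :=
    { carrier := L
      zero_mem' := zero_mem
      add_mem' := fun hu hv => add_mem _ hu _ hv
      smul_mem' := smul_mem }
  exact ⟨N, rfl, SetLike.coe_injective eq_orthogonal.symm⟩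

end SymplecticForm

/-- The composition formula for the connection maps:
`γ_{L'',L'} ∘ γ_{L',L} = sqrt(|L''∩L'| / (|L∩L''|·|L'∩L|·|L|)) · S_W(L;L',L'') · γ_{L'',L}`,
where `S_W(L;L',L'') = Σ_{ζ ∈ L ∩ (L'+L'')} χ(ζ',ζ'')` with `ζ = ζ' + ζ''`, `ζ' ∈ L'`,
`ζ'' ∈ L''` (the decomposition being specified by a choice function `d`). -/
theorem gammaMap_composition_formula
    {k A S : Type*} [Field k] [Fintype k] [Ring A] [Algebra k A] [StarRing A] [Finite A]
    (hstark : ∀ c : k, star (algebraMap k A c) = algebraMap k A c)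
    (h2 : IsUnit (2 : A))
    [AddCommGroup S] [Module k S] [Module A S] [IsScalarTower k A S]
    [FiniteDimensional k S]
    (η : S →ₗ[k] S →ₗ[k] k)
    (hsymm : ∀ s t : S, η s t = η t s)
    (hnondeg : ∀ s : S, (∀ t : S, η s t = 0) → s = 0)
    (hbalanced : ∀ (a : A) (s t : S), η (star a • s) t = η s (a • t))
    (ψ : AddChar k ℂ) (hψ : ∃ x : k, ψ x ≠ 1)
    (L L' L'' : Set (S × S)) (hL : IsLagrangian (A := A) η L)
    (hL' : IsLagrangian (A := A) η L') (hL'' : IsLagrangian (A := A) η L'')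
    (d : (S × S) → (S × S) × (S × S))
    (hd : ∀ ζ ∈ L, (∃ a ∈ L', ∃ b ∈ L'', ζ = a + b) →
      (d ζ).1 ∈ L' ∧ (d ζ).2 ∈ L'' ∧ (d ζ).1 + (d ζ).2 = ζ) :
    ∀ f ∈ fiberE η ψ L, ∀ w : S × S,
      gammaMap η ψ L'' L' (gammaMap η ψ L' L f) w
        = ((Real.sqrt ((Nat.card ↥(L'' ∩ L') : ℝ) /
              ((Nat.card ↥(L ∩ L'') : ℝ) * (Nat.card ↥(L' ∩ L) : ℝ) * (Nat.card ↥L : ℝ)))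
            : ℂ))
          * (∑ᶠ ζ ∈ {x ∈ L | ∃ a ∈ L', ∃ b ∈ L'', x = a + b},
              ψ (symplForm η (d ζ).1 (d ζ).2))
          * gammaMap η ψ L'' L f w := by
  intro f hf w
  obtain ⟨L, rfl, orthogonal_L⟩ := hL.exists_submodule hstark
  obtain ⟨L', rfl, orthogonal_L'⟩ := hL'.exists_submodule hstark
  obtain ⟨L'', rfl, orthogonal_L''⟩ := hL''.exists_submodule hstark
  have two_regular : IsSMulRegular (S × S) (2 : k) := by
    rw [← isSMulRegular_algebraMap_iff A, map_ofNat]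
    exact h2.isSMulRegular (S × S)
  simp only [Set.mem_ofPred_eq, SetLike.mem_coe, ← mem_inf_sup_iff_exists_eq_add]
  exact gammaMap_composition_formula_general (symplBilin_isAlt hsymm)
    (symplBilin_nondegenerate hsymm hnondeg) two_regular (AddChar.ne_one_iff.2 hψ)
    orthogonal_L orthogonal_L' orthogonal_L''
    (fun ζ hζ => (mem_inf_sup_iff_exists_eq_add.1 hζ).elim (hd ζ)) hf w
end
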